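/- arXiv:cs/0110010 — 3 statements merged into one kernel-verified Lean document; each statement's English description precedes it below -/
import Mathlib

section
/- For any initialized pair (v₀,v) of clock valuations and any δ ≥ 0: (1) if δ ≤ 1 then v has at most 4(k+1) pattern changes for δ (i.e., if v has n pattern changes for δ then n ≤ 4(k+1)); (2) if δ ≥ 1 then v has at least one pattern change for δ; (3) if v has no pattern change for δ then int(v) = int(v+δ). -/
open scoped BigOperators

namespace PTApaper

/-! ## Clock valuations -/

/-- A (raw) clock valuation on clocks `x_0, …, x_k`. -/
abbrev Val (k : ℕ) := Fin (k+1) → ℝ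

/-- A discrete clock valuation. -/
abbrev DVal (k : ℕ) := Fin (k+1) → ℕ

/-- A clock valuation takes nonnegative values. -/
def IsVal {k : ℕ} (v : Val k) : Prop := ∀ i, 0 ≤ v i

/-- A valuation is initial if the auxiliary clock `x_0` has value 0. -/
def Initial {k : ℕ} (v : Val k) : Prop := v 0 = 0

/-- The integral part `int(v)` of a valuation. -/
noncomputable def intPart {k : ℕ} (v : Val k) : DVal k := fun i => (⌊v i⌋).toNat

/-- The fractional parts of the relative representation `rel(v)`:
`fract(rel(v))(0) = fract (1 - fract (v 0))` and
`fract(rel(v))(i) = fract (fract (v i) + fract(rel(v))(0))` for `i ∈ K⁺`. -/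
noncomputable def relFract {k : ℕ} (v : Val k) : Fin (k+1) → ℝ := fun i =>
  if i = 0 then Int.fract (1 - Int.fract (v 0))
  else Int.fract (Int.fract (v i) + Int.fract (1 - Int.fract (v 0)))

/-- Synchronous clock progress `v + δ`. -/
def shift {k : ℕ} (v : Val k) (δ : ℝ) : Val k := fun i => v i + δ

/-- Clock reset `v↓_r`. -/
def resetVal {k : ℕ} (r : Finset (Fin (k+1))) (v : Val k) : Val k :=
  fun i => if i ∈ r then 0 else v i

/-! ## Patterns -/

/-- A raw pattern: a finite sequence of subsets of `K⁰ ∪ K¹`, where the index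
`(i, false)` stands for `i⁰` and `(i, true)` stands for `i¹`. -/
abbrev PatSeq (k : ℕ) := List (Finset (Fin (k+1) × Bool))

/-- The well-formedness conditions making `η = p₀,…,p_n` a pattern:
`0 ≤ n < 2(k+1)`, the `p_m` are nonempty and pairwise disjoint, `0⁰ ∈ p₀`,
and `p₀ ∪ … ∪ p_n = K⁰ ∪ K¹`. -/
def IsPattern {k : ℕ} (η : PatSeq k) : Prop :=
  η.length ≤ 2*(k+1) ∧
  (∀ p ∈ η, p.Nonempty) ∧
  η.Pairwise Disjoint ∧
  ((0 : Fin (k+1)), false) ∈ η.getD 0 ∅ ∧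
  (∀ x : Fin (k+1) × Bool, ∃ p ∈ η, x ∈ p)

/-- `bval v₀ v₁ b` is `v_b`. -/
def bval {k : ℕ} (v₀ v₁ : Val k) : Bool → Val k
  | false => v₀
  | true => v₁

/-- The defining ordering condition for "`(v₀,v₁)` has pattern `η = p₀,…,p_n`":
for all positions `m, m'`, copies `b, b'` and clocks `i, i'` with `i^b ∈ p_m` and
`i'^{b'} ∈ p_{m'}`, `fract(rel(v_b))(i) = fract(rel(v_{b'}))(i')` iff `m = m'`, and
`fract(rel(v_b))(i) < fract(rel(v_{b'}))(i')` iff `m < m'`. -/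
def HasPatternOrd {k : ℕ} (v₀ v₁ : Val k) (η : PatSeq k) : Prop :=
  ∀ m m' : Fin η.length, ∀ b b' : Bool, ∀ i i' : Fin (k+1),
    (i, b) ∈ η.get m → (i', b') ∈ η.get m' →
      ((relFract (bval v₀ v₁ b) i = relFract (bval v₀ v₁ b') i' ↔ m = m') ∧
       (relFract (bval v₀ v₁ b) i < relFract (bval v₀ v₁ b') i' ↔ (m : ℕ) < (m' : ℕ)))

/-- `(v₀,v₁)` has pattern `η` (written `[(v₀,v₁)] = η`). -/
def PatternOf {k : ℕ} (v₀ v₁ : Val k) (η : PatSeq k) : Prop :=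
  IsPattern η ∧ HasPatternOrd v₀ v₁ η

/-- A pattern is initial if it is the pattern of `(v₀,v₀)` for some initial valuation `v₀`. -/
def InitialPattern {k : ℕ} (η : PatSeq k) : Prop :=
  ∃ v₀ : Val k, IsVal v₀ ∧ Initial v₀ ∧ PatternOf v₀ v₀ η

/-- The equivalence `(v₀¹,v₁) ≈ (v₀²,v₂)`: same pattern and same integral parts. -/
def PairEquiv {k : ℕ} (va vb vc vd : Val k) : Prop :=
  (∃ η : PatSeq k, PatternOf va vb η ∧ PatternOf vc vd η) ∧
  intPart va = intPart vc ∧ intPart vb = intPart vd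

/-! ## now-position, Next, next, reset -/

/-- The index of the now-position, i.e. the position containing `0¹`. -/
def nowIdx {k : ℕ} (η : PatSeq k) : ℕ :=
  η.findIdx fun p => decide (((0 : Fin (k+1)), true) ∈ p)

/-- A merge-pattern: the now-position is the singleton `{0¹}`. -/
def IsMergePat {k : ℕ} (η : PatSeq k) : Prop :=
  η.getD (nowIdx η) ∅ = ({((0 : Fin (k+1)), true)} : Finset (Fin (k+1) × Bool))

/-- A split-pattern: a pattern that is not a merge-pattern. -/
def IsSplitPat {k : ℕ} (η : PatSeq k) : Prop := ¬ IsMergePat η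

/-- The next pattern `Next(η)`. -/
def NextPat {k : ℕ} (η : PatSeq k) : PatSeq k :=
  let i := nowIdx η
  if η.getD i ∅ = ({((0 : Fin (k+1)), true)} : Finset (Fin (k+1) × Bool)) then
    -- merge case : `p₀, …, p_{i-1} ∪ {0¹}, p_{i+1}, …, p_n`
    η.take (i-1) ++ [η.getD (i-1) ∅ ∪ {((0 : Fin (k+1)), true)}] ++ η.drop (i+1)
  else if i = 0 then
    -- split case with `i = 0` : `p₀ ∖ {0¹}, p₁, …, p_n, {0¹}`
    (η.getD 0 ∅ \ {((0 : Fin (k+1)), true)}) :: (η.drop 1 ++ [{((0 : Fin (k+1)), true)}])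
  else
    -- split case with `i > 0` : `p₀, …, p_{i-1}, {0¹}, p_i ∖ {0¹}, p_{i+1}, …, p_n`
    η.take i ++ [{((0 : Fin (k+1)), true)}, η.getD i ∅ \ {((0 : Fin (k+1)), true)}]
      ++ η.drop (i+1)

/-- The counter update of `next(η,u)`. -/
def nextD {k : ℕ} (η : PatSeq k) (u : DVal k) : DVal k :=
  let i := nowIdx η
  if η.getD i ∅ = ({((0 : Fin (k+1)), true)} : Finset (Fin (k+1) × Bool)) then
    fun j =>
      if j = 0 then (if i = 1 then u 0 + 1 else u 0)
      else (if (j, true) ∈ η.getD (i-1) ∅ then u j + 1 else u j)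
  else u

/-- `next(η,u)`. -/
def nextPair {k : ℕ} (η : PatSeq k) (u : DVal k) : PatSeq k × DVal k :=
  (NextPat η, nextD η u)

/-- The pattern part of `reset_r(η,u)`: all indices `j¹`, `j ∈ r`, are moved into the
now-position, and entries that become empty are deleted. -/
def ResetPat {k : ℕ} (r : Finset (Fin (k+1))) (η : PatSeq k) : PatSeq k :=
  let r1 : Finset (Fin (k+1) × Bool) := r.image (fun j => (j, true))
  let i := nowIdx η
  (η.mapIdx (fun m p => if m = i then p ∪ r1 else p \ r1)).filter (fun p => decide (p ≠ ∅))

/-- The counter update of `reset_r(η,u)`. -/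
def resetD {k : ℕ} (r : Finset (Fin (k+1))) (u : DVal k) : DVal k :=
  fun j => if j ∈ r then 0 else u j

/-- `reset_r(η,u)`. -/
def resetPair {k : ℕ} (r : Finset (Fin (k+1))) (η : PatSeq k) (u : DVal k) :
    PatSeq k × DVal k :=
  (ResetPat r η, resetD r u)

/-! ## Pattern changes -/

/-- `v` has no pattern change for `δ`. -/
def NoChange {k : ℕ} (v₀ v : Val k) (δ : ℝ) : Prop :=
  ∃ η : PatSeq k, PatternOf v₀ v η ∧
    ∀ δ', 0 ≤ δ' → δ' ≤ δ → PatternOf v₀ (shift v δ') η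

/-- `v` has one pattern change for `δ`. -/
def OneChange {k : ℕ} (v₀ v : Val k) (δ : ℝ) : Prop :=
  ∃ η η' : PatSeq k, PatternOf v₀ v η ∧ PatternOf v₀ (shift v δ) η' ∧
    NextPat η = η' ∧
    ((∀ δ', 0 < δ' → δ' < δ → PatternOf v₀ (shift v δ') η) ∨
     (∀ δ', 0 < δ' → δ' < δ → PatternOf v₀ (shift v δ') η'))

/-- `v` has `n` pattern changes for `δ` (for `n ≥ 1`): `δ = δ₁ + … + δ_n` with each
`δ_j > 0` and `v + δ₁ + … + δ_j` has one pattern change for `δ_{j+1}`. -/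
def NChanges {k : ℕ} (v₀ v : Val k) (n : ℕ) (δ : ℝ) : Prop :=
  ∃ d : ℕ → ℝ, (∀ j < n, 0 < d j) ∧ (∑ j ∈ Finset.range n, d j) = δ ∧
    ∀ j < n, OneChange v₀ (shift v (∑ j' ∈ Finset.range j, d j')) (d j)

/-! ## Clock constraints -/

/-- Comparison operators `<, ≤, =, ≥, >`. -/
inductive CCmp | lt | le | eq | ge | gt

/-- Evaluation of a comparison operator on reals. -/
def CCmp.evalR : CCmp → ℝ → ℝ → Prop
  | .lt, a, b => a < b
  | .le, a, b => a ≤ b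
  | .eq, a, b => a = b
  | .ge, a, b => a ≥ b
  | .gt, a, b => a > b

/-- Clock constraints over the clocks `x_1, …, x_k` (indexed by `Fin k`, clock
`x_{i+1}` for `i : Fin k`): Boolean combinations of `x_i - x_j # d` and `x_i # d`. -/
inductive CC (k : ℕ)
  | diff (i j : Fin k) (op : CCmp) (d : ℕ) : CC k
  | single (i : Fin k) (op : CCmp) (d : ℕ) : CC k
  | not (c : CC k) : CC k
  | and (c₁ c₂ : CC k) : CC k

/-- `v ∈ c` : the valuation `v` satisfies the clock constraint `c`. -/
def CC.sat {k : ℕ} (v : Val k) : CC k → Prop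
  | .diff i j op d => op.evalR (v i.succ - v j.succ) (d : ℝ)
  | .single i op d => op.evalR (v i.succ) (d : ℝ)
  | .not c => ¬ c.sat v
  | .and c₁ c₂ => c₁.sat v ∧ c₂.sat v

/-- The position (in `η`) of an index `x ∈ K⁰ ∪ K¹`. -/
def posOf {k : ℕ} (η : PatSeq k) (x : Fin (k+1) × Bool) : ℕ :=
  η.findIdx fun p => decide (x ∈ p)

/-- The truth value, given by pattern `η`, of the fractional ordering
`fract(x_a) > fract(x_b)`. -/
def fracGtP {k : ℕ} (η : PatSeq k) (a b : Fin (k+1)) : Prop :=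
  let i := posOf η ((0 : Fin (k+1)), true)
  let m₁ := posOf η (a, true)
  let m₂ := posOf η (b, true)
  (m₁ < i ∧ i ≤ m₂) ∨ (m₂ < m₁ ∧ m₁ < i) ∨ (i ≤ m₂ ∧ m₂ < m₁)

/-- The truth value, given by pattern `η`, of `fract(x_a) = fract(x_b)`. -/
def fracEqP {k : ℕ} (η : PatSeq k) (a b : Fin (k+1)) : Prop :=
  posOf η (a, true) = posOf η (b, true)

/-- The truth value, given by pattern `η`, of `fract(x_a) = 0`. -/
def fracZeroP {k : ℕ} (η : PatSeq k) (a : Fin (k+1)) : Prop :=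
  posOf η (a, true) = posOf η ((0 : Fin (k+1)), true)

/-- `u ∈ c^η` : the discrete valuation `u` satisfies the constraint `c^η`, obtained by
rewriting `c` as `I(c)` over integral parts and fractional orderings and substituting the
truth values of the fractional orderings determined by the pattern `η`. -/
def CC.satP {k : ℕ} (η : PatSeq k) (u : DVal k) : CC k → Prop
  | .diff i j op d =>
      let I : ℤ := (u i.succ : ℤ) - (u j.succ : ℤ)
      (match op with
      | .lt => I < d ∨ (I = d ∧ fracGtP η j.succ i.succ)
      | .le => I < d ∨ (I = d ∧ (fracGtP η j.succ i.succ ∨ fracEqP η i.succ j.succ))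
      | .eq => I = d ∧ fracEqP η i.succ j.succ
      | .ge => I > d ∨ (I = d ∧ (fracGtP η i.succ j.succ ∨ fracEqP η i.succ j.succ))
      | .gt => I > d ∨ (I = d ∧ fracGtP η i.succ j.succ))
  | .single i op d =>
      let I : ℤ := (u i.succ : ℤ)
      (match op with
      | .lt => I < d
      | .le => I < d ∨ (I = d ∧ fracZeroP η i.succ)
      | .eq => I = d ∧ fracZeroP η i.succ
      | .ge => I ≥ d
      | .gt => I > d ∨ (I = d ∧ ¬ fracZeroP η i.succ))
  | .not c => ¬ c.satP η u
  | .and c₁ c₂ => c₁.satP η u ∧ c₂.satP η u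

/-! ## Pushdown timed automata -/

/-- A pushdown timed automaton `⟨S, {x₁,…,x_k}, Inv, R, Γ, PD⟩`:
`Inv` assigns an invariant to each state, `R s s' = (Rc s s', Rr s s')` assigns a reset
condition and a set of clock resets (a subset of `K⁺`) to each edge, and
`PD s s' = (PDa s s', PDw s s')` assigns a stack operation to each edge. -/
structure PTA (k : ℕ) (S : Type) (Γ : Type) where
  Inv : S → CC k
  Rc : S → S → CC k
  Rr : S → S → Finset (Fin (k+1))
  hRr : ∀ s s', (0 : Fin (k+1)) ∉ Rr s s'
  PDa : S → S → Γ
  PDw : S → S → List Γ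

/-- A configuration `(s, v, w)` of a PTA. -/
abbrev Config (k : ℕ) (S Γ : Type) := S × Val k × List Γ

/-- The one-step transition relation `→_A` of a PTA. -/
def Step {k : ℕ} {S Γ : Type} (A : PTA k S Γ) (c₁ c₂ : Config k S Γ) : Prop :=
  -- progress transition
  (c₁.1 = c₂.1 ∧ c₁.2.2 = c₂.2.2 ∧
    ∃ δ : ℝ, 0 < δ ∧ c₂.2.1 = shift c₁.2.1 δ ∧
      ∀ δ', 0 ≤ δ' → δ' ≤ δ → (A.Inv c₁.1).sat (shift c₁.2.1 δ')) ∨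
  -- reset transition
  ((A.Inv c₁.1).sat c₁.2.1 ∧ (A.Rc c₁.1 c₂.1).sat c₁.2.1 ∧
    c₂.2.1 = resetVal (A.Rr c₁.1 c₂.1) c₁.2.1 ∧ (A.Inv c₂.1).sat c₂.2.1 ∧
    ∃ w : List Γ, c₁.2.2 = A.PDa c₁.1 c₂.1 :: w ∧ c₂.2.2 = A.PDw c₁.1 c₂.1 ++ w)

/-- `→*_A`, the transitive closure of `→_A`. -/
def Reach {k : ℕ} {S Γ : Type} (A : PTA k S Γ) : Config k S Γ → Config k S Γ → Prop :=
  Relation.TransGen (Step A)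

/-- `(s₀,u₀,w₀) →*_{A,η} (s₁,u₁,w₁)`. -/
def ReachPat {k : ℕ} {S Γ : Type} (A : PTA k S Γ) (η : PatSeq k)
    (s₀ : S) (u₀ : DVal k) (w₀ : List Γ) (s₁ : S) (u₁ : DVal k) (w₁ : List Γ) : Prop :=
  ∃ v₀ v₁ : Val k, IsVal v₀ ∧ IsVal v₁ ∧ v₀ 0 = 0 ∧
    intPart v₀ = u₀ ∧ intPart v₁ = u₁ ∧ PatternOf v₀ v₁ η ∧
    Reach A (s₀, v₀, w₀) (s₁, v₁, w₁)

/-! ## The pattern graph -/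

/-- A configuration `(s, η, u, w)` of the pattern graph. -/
abbrev GConfig (k : ℕ) (S Γ : Type) := S × PatSeq k × DVal k × List Γ

/-- The one-step transition relation `→_G` of the pattern graph `G` of a PTA `A`,
through progress edges, stay edges and reset edges. -/
def GStep {k : ℕ} {S Γ : Type} (A : PTA k S Γ) (c₁ c₂ : GConfig k S Γ) : Prop :=
  -- progress edge
  (c₁.1 = c₂.1 ∧ c₁.2.2.2 = c₂.2.2.2 ∧
    nextPair c₁.2.1 c₁.2.2.1 = (c₂.2.1, c₂.2.2.1) ∧
    (A.Inv c₁.1).satP c₁.2.1 c₁.2.2.1 ∧ (A.Inv c₁.1).satP c₂.2.1 c₂.2.2.1) ∨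
  -- stay edge
  (c₁ = c₂ ∧ IsMergePat c₁.2.1 ∧ (A.Inv c₁.1).satP c₁.2.1 c₁.2.2.1) ∨
  -- reset edge
  (resetPair (A.Rr c₁.1 c₂.1) c₁.2.1 c₁.2.2.1 = (c₂.2.1, c₂.2.2.1) ∧
    ((A.Rc c₁.1 c₂.1).and (A.Inv c₁.1)).satP c₁.2.1 c₁.2.2.1 ∧
    (A.Inv c₂.1).satP c₂.2.1 c₂.2.2.1 ∧
    ∃ w : List Γ, c₁.2.2.2 = A.PDa c₁.1 c₂.1 :: w ∧ c₂.2.2.2 = A.PDw c₁.1 c₂.1 ++ w)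

/-- `→*_G`, the transitive closure of `→_G`. -/
def GReach {k : ℕ} {S Γ : Type} (A : PTA k S Γ) : GConfig k S Γ → GConfig k S Γ → Prop :=
  Relation.TransGen (GStep A)

end PTApaper
namespace PTApaper

/-!
As time passes, the fractional part of `0¹` runs downwards around the circle `ℝ/ℤ` at unit speed,
while every other index keeps its fractional part. Hence the pattern changes exactly when `0¹`
arrives at, or departs from, the position of one of the other `2k + 1` indices, i.e. at the delays
`t ≡ f(0¹) - f(x)` modulo `1` with `x ≠ 0¹`, where `f` is the fractional part before the delay;
arrivals are merges and departures are splits.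

Pattern changes therefore alternate between meeting and non-meeting delays, and at most `2k + 1`
delays in `[0, 1)` are meeting, which bounds the number of changes by `4k + 3`. Conversely `0¹`
visits `0⁰` in any time interval of length `1`, and the meeting delays are discrete, so the interval
decomposes into arrivals and departures. Finally a clock value becomes an integer only when `0¹`
meets some index, so while the pattern stays constant for a positive time each clock stays strictly
between two consecutive integers.
-/

section General

theorem fract_one_sub_fract {R : Type*} [CommRing R] [LinearOrder R] [IsStrictOrderedRing R]
    [FloorRing R] (a : R) : Int.fract (1 - Int.fract a) = Int.fract (-a) :=
  Int.fract_eq_fract.2 ⟨1 + ⌊a⌋, by push_cast; linarith [Int.floor_add_fract a]⟩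

/-- Induction on the number of elements of `C` in the interval: if there are at least two, cut
strictly between them. -/
theorem rel_of_finite_inter_Icc {α : Type*} [LinearOrder α] [DenselyOrdered α] {R : α → α → Prop}
    [IsTrans α R] {C : Set α} (hfin : ∀ a b, (C ∩ Set.Icc a b).Finite)
    (hunique : ∀ a b c, a < b → C ∩ Set.Icc a b = {c} → R a b) {a b : α} (hab : a < b)
    (hne : (C ∩ Set.Icc a b).Nonempty) : R a b := by
  induction hn : (C ∩ Set.Icc a b).ncard using Nat.strong_induction_on generalizing a b with
  | _ n ih =>
  rcases hne.exists_eq_singleton_or_nontrivial with ⟨c, hc⟩ | hnontriv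
  · exact hunique a b c hab hc
  obtain ⟨c, hc, d, hd, hcd⟩ := hnontriv.exists_lt
  obtain ⟨m, hcm, hmd⟩ := exists_between hcd
  have ham : a < m := hc.2.1.trans_lt hcm
  have hmb : m < b := hmd.trans_le hd.2.2
  have hleft : (C ∩ Set.Icc a m).ncard < n := hn ▸ Set.ncard_lt_ncard
    ⟨Set.inter_subset_inter_right C (Set.Icc_subset_Icc_right hmb.le),
      fun hsub => (hsub hd).2.2.not_gt hmd⟩ (hfin a b)
  have hright : (C ∩ Set.Icc m b).ncard < n := hn ▸ Set.ncard_lt_ncard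
    ⟨Set.inter_subset_inter_right C (Set.Icc_subset_Icc_left ham.le),
      fun hsub => (hsub hc).2.1.not_gt hcm⟩ (hfin a b)
  exact _root_.trans (ih _ hleft ham ⟨c, hc.1, hc.2.1, hcm.le⟩ rfl)
    (ih _ hright hmb ⟨d, hd.1, hmd.le, hd.2.2⟩ rfl)

theorem le_two_mul_card_filter_add_one_of_alternating {P : ℕ → Prop} [DecidablePred P] {n : ℕ}
    (halt : ∀ j, j + 1 < n → (P (j + 1) ↔ ¬P j)) :
    n ≤ 2 * ((Finset.range n).filter P).card + 1 := by
  induction n using Nat.twoStepInduction with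
  | zero => simp
  | one => simp
  | more n ih _ =>
    have ih := ih fun j hj => halt j (by lia)
    have hlast := halt n (by lia)
    rw [Finset.range_add_one, Finset.range_add_one]
    by_cases hn : P n
    · rw [Finset.filter_insert, if_neg (by simp [hlast, hn]), Finset.filter_insert, if_pos hn,
        Finset.card_insert_of_notMem (by simp)]
      lia
    · rw [Finset.filter_insert, if_pos (hlast.2 hn), Finset.filter_insert, if_neg hn,
        Finset.card_insert_of_notMem (by simp)]
      lia

theorem floor_eq_floor_add_of_forall_fract_ne_zero {R : Type*} [CommRing R] [LinearOrder R]
    [IsStrictOrderedRing R] [FloorRing R] {a δ : R} (hδ : 0 ≤ δ)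
    (h : ∀ t ∈ Set.Icc 0 δ, Int.fract (a + t) ≠ 0) : ⌊a⌋ = ⌊a + δ⌋ := by
  refine le_antisymm (Int.floor_mono (by linarith)) (not_lt.1 fun hlt => ?_)
  have ha : a < ⌊a + δ⌋ := Int.floor_lt.1 hlt
  refine h (⌊a + δ⌋ - a) ⟨by linarith, by linarith [Int.floor_le (a + δ)]⟩ ?_
  simp

theorem strictMonoOn_sum_range {M : Type*} [AddCommMonoid M] [PartialOrder M]
    [IsOrderedCancelAddMonoid M] {d : ℕ → M} {n : ℕ} (hd : ∀ j < n, 0 < d j) :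
    StrictMonoOn (fun j => ∑ i ∈ Finset.range j, d i) (Set.Iic n) :=
  fun i _ j (hj : j ≤ n) hij =>
    Finset.sum_lt_sum_of_subset (Finset.range_mono hij.le) (Finset.mem_range.2 hij) (by simp)
      (hd i (by lia)) fun m hm _ => (hd m ((Finset.mem_range.1 hm).trans_le hj)).le

end General

section FiberList

variable {α β : Type*} {s : Set α} {a x y : α} {A B l : List (Finset α)} {P : Finset α}

/-- `l` lists the nonempty fibres of `f` on `s`, in increasing order of the value of `f`. A pattern
is such a list for the fractional parts of a pair of valuations. -/
structure IsFiberList [Preorder β] (s : Set α) (f : α → β) (l : List (Finset α)) : Prop where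
  nonempty : ∀ p ∈ l, p.Nonempty
  mem_iff : ∀ x, x ∈ s ↔ ∃ p ∈ l, x ∈ p
  eq_of_mem : ∀ p ∈ l, ∀ x ∈ p, ∀ y ∈ p, f x = f y
  pairwise_lt : l.Pairwise fun p q => ∀ x ∈ p, ∀ y ∈ q, f x < f y

namespace IsFiberList

section Preorder

variable [Preorder β] {f g : α → β}

theorem congr (h : IsFiberList s f l) (hfg : Set.EqOn f g s) : IsFiberList s g l where
  nonempty := h.nonempty
  mem_iff := h.mem_iff
  eq_of_mem p hp x hx y hy := by
    rw [← hfg ((h.mem_iff x).2 ⟨p, hp, hx⟩), ← hfg ((h.mem_iff y).2 ⟨p, hp, hy⟩)]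
    exact h.eq_of_mem p hp x hx y hy
  pairwise_lt := h.pairwise_lt.imp_of_mem fun {p q} hp hq hlt x hx y hy => by
    rw [← hfg ((h.mem_iff x).2 ⟨p, hp, hx⟩), ← hfg ((h.mem_iff y).2 ⟨q, hq, hy⟩)]
    exact hlt x hx y hy

theorem pairwise_disjoint (h : IsFiberList s f l) : l.Pairwise Disjoint :=
  h.pairwise_lt.imp fun hlt =>
    Finset.disjoint_left.2 fun x hxp hxq => (hlt x hxp x hxq).false

theorem append_singleton_cons_iff (ha : a ∈ s) :
    IsFiberList s f (A ++ {a} :: B) ↔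
      IsFiberList (s \ {a}) f (A ++ B) ∧
        (∀ p ∈ A, ∀ x ∈ p, f x < f a) ∧ ∀ p ∈ B, ∀ x ∈ p, f a < f x := by
  constructor
  · rintro ⟨hne, hmem, heq, hlt⟩
    simp only [List.pairwise_append, List.pairwise_cons, List.mem_cons] at hlt
    refine ⟨⟨?_, ?_, ?_, ?_⟩, ?_, ?_⟩ <;> grind
  · rintro ⟨⟨hne, hmem, heq, hlt⟩, hA, hB⟩
    simp only [List.pairwise_append] at hlt
    refine ⟨?_, fun x => ?_, ?_, ?_⟩
    · grind [Finset.singleton_nonempty]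
    · have hx := hmem x
      simp only [List.mem_append, List.mem_cons, or_and_right, exists_or, exists_eq_left,
        Finset.mem_singleton, Set.mem_sdiff, Set.mem_singleton_iff] at hx ⊢
      by_cases hxa : x = a <;> grind
    · grind
    · simp only [List.pairwise_append, List.pairwise_cons, List.mem_cons]
      grind

theorem append_cons_iff_erase [DecidableEq α] (ha : a ∈ P) (hP : P ≠ {a}) :
    IsFiberList s f (A ++ P :: B) ↔
      a ∈ s ∧ IsFiberList (s \ {a}) f (A ++ P.erase a :: B) ∧ ∀ x ∈ P, f x = f a := by
  have hne' : (P.erase a).Nonempty := by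
    rw [Finset.erase_nonempty ha]
    exact (Finset.nontrivial_iff_ne_singleton ha).2 hP
  have hblock (x : α) :
      (∃ p ∈ A ++ P :: B, x ∈ p) ↔ x = a ∨ ∃ p ∈ A ++ P.erase a :: B, x ∈ p := by
    simp only [List.mem_append, List.mem_cons, or_and_right, exists_or, exists_eq_left,
      Finset.mem_erase]
    by_cases hxa : x = a <;> grind
  constructor
  · rintro ⟨hne, hmem, heq, hlt⟩
    simp only [hblock] at hmem
    simp only [List.pairwise_append, List.pairwise_cons, List.mem_cons] at hlt
    refine ⟨(hmem a).2 (.inl rfl), ⟨?_, fun x => ?_, ?_, ?_⟩, ?_⟩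
    · grind
    · have ha_notMem : ¬∃ p ∈ A ++ P.erase a :: B, a ∈ p := by grind
      rw [Set.mem_sdiff, Set.mem_singleton_iff, hmem]
      by_cases hxa : x = a
      · simpa [hxa] using ha_notMem
      · simp [hxa]
    · grind
    · simp only [List.pairwise_append, List.pairwise_cons, List.mem_cons]
      grind
    · grind
  · rintro ⟨has, ⟨hne, hmem, heq, hlt⟩, hPa⟩
    simp only [List.pairwise_append, List.pairwise_cons, List.mem_cons] at hlt
    refine ⟨?_, fun x => ?_, ?_, ?_⟩
    · grind
    · rw [hblock, ← hmem, Set.mem_sdiff, Set.mem_singleton_iff]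
      by_cases hxa : x = a <;> simp [hxa, has]
    · grind
    · simp only [List.pairwise_append, List.pairwise_cons, List.mem_cons]
      grind

theorem trichotomy_get (h : IsFiberList s f l) {i j : Fin l.length} (hx : x ∈ l.get i)
    (hy : y ∈ l.get j) : (f x = f y ↔ i = j) ∧ (f x < f y ↔ i < j) := by
  have hlt := List.pairwise_iff_get.1 h.pairwise_lt
  rcases lt_trichotomy i j with hij | rfl | hji
  · have hxy := hlt i j hij x hx y hy
    simp [hxy, hxy.ne, hij, hij.ne]
  · simp [h.eq_of_mem _ (List.get_mem l i) x hx y hy]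
  · have hyx := hlt j i hji y hy x hx
    simp [hyx.not_gt, hyx.ne', hji.not_gt, hji.ne']

theorem mem_iff_eq (h : IsFiberList s f l) (hP : P ∈ l) (hx : x ∈ P) (hy : y ∈ s) :
    y ∈ P ↔ f y = f x := by
  refine ⟨fun hyP => h.eq_of_mem P hP y hyP x hx, fun hyx => ?_⟩
  obtain ⟨Q, hQ, hyQ⟩ := (h.mem_iff y).1 hy
  obtain ⟨i, rfl⟩ := List.mem_iff_get.1 hP
  obtain ⟨j, rfl⟩ := List.mem_iff_get.1 hQ
  exact (h.trichotomy_get hyQ hx).1.1 hyx ▸ hyQ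

theorem length_le_card [Fintype α] (h : IsFiberList s f l) : l.length ≤ Fintype.card α := by
  choose rep hrep using fun i : Fin l.length => h.nonempty (l.get i) (List.get_mem l i)
  have hinj : Function.Injective rep := fun i j hij =>
    (h.trichotomy_get (hrep i) (hrep j)).1.1 (congrArg f hij)
  simpa using Fintype.card_le_of_injective rep hinj

theorem mem_head_of_le (h : IsFiberList s f l) (hx : x ∈ s) (hmin : ∀ y ∈ s, f x ≤ f y) :
    x ∈ l.getD 0 ∅ := by
  obtain ⟨p, hp, hxp⟩ := (h.mem_iff x).1 hx
  cases l with
  | nil => simp at hp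
  | cons q l =>
    rcases List.mem_cons.1 hp with rfl | hpl
    · exact hxp
    · obtain ⟨y, hy⟩ := h.nonempty q List.mem_cons_self
      have hyx := List.rel_of_pairwise_cons h.pairwise_lt hpl y hy x hxp
      have hxy := hmin y ((h.mem_iff y).2 ⟨q, List.mem_cons_self, hy⟩)
      exact absurd hyx hxy.not_gt

end Preorder

theorem exists_univ [Finite α] [LinearOrder β] (f : α → β) :
    ∃ l, IsFiberList Set.univ f l := by
  classical
  have := Fintype.ofFinite α
  refine ⟨((Finset.univ.image f).sort (· ≤ ·)).map fun b => Finset.univ.filter (f · = b),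
    ?_, ?_, ?_, ?_⟩
  · simp only [List.mem_map, Finset.mem_sort, Finset.mem_image, Finset.mem_univ, true_and]
    rintro _ ⟨_, ⟨x, rfl⟩, rfl⟩
    exact ⟨x, by simp⟩
  · simp
  · simp only [List.mem_map]
    rintro _ ⟨b, -, rfl⟩
    simp +contextual
  · rw [List.pairwise_map]
    exact (Finset.sortedLT_sort _).pairwise.imp fun hbc => by simp +contextual [hbc]

end IsFiberList

theorem insert_ne_singleton [DecidableEq α] (hP : P.Nonempty) (ha : a ∉ P) : insert a P ≠ {a} := by
  obtain ⟨x, hx⟩ := hP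
  intro heq
  exact ha (Finset.mem_singleton.1 (heq ▸ Finset.mem_insert_of_mem hx) ▸ hx)

end FiberList

section NextPattern

variable {k : ℕ} {η A B : PatSeq k} {P Q : Finset (Fin (k + 1) × Bool)}

/-- The index `0¹`, whose block in a pattern is the now-position. -/
abbrev now (k : ℕ) : Fin (k + 1) × Bool := (0, true)

theorem nowIdx_append_cons (hA : ∀ p ∈ A, now k ∉ p) (hP : now k ∈ P) :
    nowIdx (A ++ P :: B) = A.length := by
  have hAfind : A.findIdx (fun p => decide (now k ∈ p)) = A.length :=
    List.findIdx_eq_length.2 (by simpa using hA)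
  simp [nowIdx, List.findIdx_append, hAfind, List.findIdx_cons, hP]

theorem isMergePat_append_cons_iff (hA : ∀ p ∈ A, now k ∉ p) (hP : now k ∈ P) :
    IsMergePat (A ++ P :: B) ↔ P = {now k} := by
  simp [IsMergePat, nowIdx_append_cons hA hP]

theorem nextPat_merge (hA : ∀ p ∈ A, now k ∉ p) (hQ : now k ∉ Q) :
    NextPat (A ++ Q :: {now k} :: B) = A ++ insert (now k) Q :: B := by
  have hidx : nowIdx (A ++ Q :: {now k} :: B) = A.length + 1 := by
    rw [List.append_cons, nowIdx_append_cons (by grind) (Finset.mem_singleton_self _)]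
    simp
  have hdrop : (A ++ Q :: {now k} :: B).drop (A.length + 2) = B := by
    rw [List.drop_length_add_append]
    rfl
  simp [NextPat, hidx, List.getD_eq_getElem?_getD, hdrop, Finset.union_singleton]

theorem nextPat_split_head (hP : now k ∈ P) (hne : P ≠ {now k}) :
    NextPat (P :: B) = P.erase (now k) :: (B ++ [{now k}]) := by
  have hidx : nowIdx (P :: B) = 0 := nowIdx_append_cons (A := []) (by simp) hP
  simp [NextPat, hidx, hne, Finset.sdiff_singleton_eq_erase]

theorem nextPat_split (hA : ∀ p ∈ A, now k ∉ p) (hA_ne : A ≠ []) (hP : now k ∈ P)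
    (hne : P ≠ {now k}) :
    NextPat (A ++ P :: B) = A ++ {now k} :: P.erase (now k) :: B := by
  simp [NextPat, nowIdx_append_cons hA hP, List.getD_eq_getElem?_getD, List.drop_append, hne, hA_ne,
    Finset.sdiff_singleton_eq_erase]

theorem IsPattern.exists_eq_append_cons (h : IsPattern η) :
    ∃ A P B, η = A ++ P :: B ∧ now k ∈ P ∧ (∀ p ∈ A, now k ∉ p) ∧ ∀ p ∈ B, now k ∉ p := by
  obtain ⟨-, -, hdisj, -, hcover⟩ := h
  obtain ⟨P, hPη, hP⟩ := hcover (now k)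
  obtain ⟨A, B, rfl⟩ := List.append_of_mem hPη
  simp only [List.pairwise_append, List.pairwise_cons] at hdisj
  exact ⟨A, P, B, rfl, hP,
    fun p hp hnow => Finset.disjoint_left.1 (hdisj.2.2 p hp P List.mem_cons_self) hnow hP,
    fun p hp => Finset.disjoint_left.1 (hdisj.2.1.1 p hp) hP⟩

theorem IsPattern.exists_eq_of_isMergePat (h : IsPattern η) (hmerge : IsMergePat η) :
    ∃ A Q B, η = A ++ Q :: {now k} :: B ∧ Q.Nonempty ∧ (∀ p ∈ A, now k ∉ p) ∧ now k ∉ Q := by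
  obtain ⟨A, P, B, rfl, hP, hA, -⟩ := h.exists_eq_append_cons
  obtain rfl := (isMergePat_append_cons_iff hA hP).1 hmerge
  obtain ⟨-, hne, -, hhead, -⟩ := h
  rcases List.eq_nil_or_concat A with rfl | ⟨A', Q, rfl⟩
  · simp at hhead
  · exact ⟨A', Q, B, by simp, hne Q (by simp), by grind, hA Q (by simp)⟩

theorem IsPattern.exists_eq_of_not_isMergePat (h : IsPattern η) (hsplit : ¬IsMergePat η) :
    ∃ A P B, η = A ++ P :: B ∧ now k ∈ P ∧ P ≠ {now k} ∧ (∀ p ∈ A, now k ∉ p) ∧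
      ∀ p ∈ B, now k ∉ p := by
  obtain ⟨A, P, B, rfl, hP, hA, hB⟩ := h.exists_eq_append_cons
  exact ⟨A, P, B, rfl, hP, mt (isMergePat_append_cons_iff hA hP).2 hsplit, hA, hB⟩

theorem IsPattern.isMergePat_nextPat_iff (h : IsPattern η) :
    IsMergePat (NextPat η) ↔ ¬IsMergePat η := by
  by_cases hmerge : IsMergePat η
  · obtain ⟨A, Q, B, rfl, hQ_ne, hA, hQ⟩ := h.exists_eq_of_isMergePat hmerge
    simp only [hmerge, not_true_eq_false, nextPat_merge hA hQ,
      isMergePat_append_cons_iff hA (Finset.mem_insert_self _ _),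
      insert_ne_singleton hQ_ne hQ]
  · obtain ⟨A, P, B, rfl, hP, hne, hA, hB⟩ := h.exists_eq_of_not_isMergePat hmerge
    simp only [hmerge, not_false_eq_true, iff_true]
    rcases eq_or_ne A [] with rfl | hA_ne
    · rw [List.nil_append, nextPat_split_head hP hne, ← List.cons_append]
      exact (isMergePat_append_cons_iff (by grind) (Finset.mem_singleton_self _)).2 rfl
    · rw [nextPat_split hA hA_ne hP hne]
      exact (isMergePat_append_cons_iff hA (Finset.mem_singleton_self _)).2 rfl

end NextPattern

section Shift

variable {k : ℕ}

theorem shift_zero (v : Val k) : shift v 0 = v :=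
  funext fun i => add_zero (v i)

theorem shift_shift (v : Val k) (s t : ℝ) : shift (shift v s) t = shift v (s + t) :=
  funext fun i => add_assoc (v i) s t

end Shift

section PairFract

variable {k : ℕ} {v₀ v : Val k} {η : PatSeq k} {δ : ℝ} {x : Fin (k + 1) × Bool}

theorem relFract_zero (v : Val k) : relFract v 0 = Int.fract (-v 0) := by
  simp [relFract, fract_one_sub_fract]

theorem relFract_of_ne_zero (v : Val k) {i : Fin (k + 1)} (hi : i ≠ 0) :
    relFract v i = Int.fract (v i - v 0) := by
  rw [relFract, if_neg hi, fract_one_sub_fract, sub_eq_add_neg, Int.fract_eq_fract]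
  exact ⟨-⌊v i⌋ - ⌊-v 0⌋, by
    push_cast; linarith [Int.floor_add_fract (v i), Int.floor_add_fract (-v 0)]⟩

/-- The fractional part `fract(rel(v_b))(i)` of the index `i^b`, where `v₁ = v`. -/
noncomputable def pairFract (v₀ v : Val k) (x : Fin (k + 1) × Bool) : ℝ :=
  relFract (bval v₀ v x.2) x.1

theorem pairFract_nonneg (v₀ v : Val k) (x : Fin (k + 1) × Bool) : 0 ≤ pairFract v₀ v x := by
  unfold pairFract relFract
  split_ifs <;> exact Int.fract_nonneg _

theorem pairFract_lt_one (v₀ v : Val k) (x : Fin (k + 1) × Bool) : pairFract v₀ v x < 1 := by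
  unfold pairFract relFract
  split_ifs <;> exact Int.fract_lt_one _

theorem pairFract_zero_false (h₀ : Initial v₀) : pairFract v₀ v (0, false) = 0 := by
  have hv₀ : v₀ 0 = 0 := h₀
  simp [pairFract, bval, relFract_zero, hv₀]

theorem pairFract_shift_of_ne (hx : x ≠ now k) : pairFract v₀ (shift v δ) x = pairFract v₀ v x := by
  obtain ⟨i, _ | _⟩ := x
  · rfl
  · have hi : i ≠ 0 := by simpa using hx
    simp [pairFract, bval, relFract_of_ne_zero _ hi, shift]

theorem pairFract_shift_now :
    pairFract v₀ (shift v δ) (now k) = Int.fract (pairFract v₀ v (now k) - δ) := by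
  simp only [pairFract, bval, relFract_zero, shift]
  exact Int.fract_eq_fract.2 ⟨⌊-v 0⌋, by linarith [Int.floor_add_fract (-v 0)]⟩

theorem PatternOf.isFiberList (h : PatternOf v₀ v η) :
    IsFiberList Set.univ (pairFract v₀ v) η := by
  obtain ⟨⟨-, hne, -, -, hcover⟩, hord⟩ := h
  refine ⟨hne, fun x => iff_of_true (Set.mem_univ x) (hcover x), fun p hp x hx y hy => ?_, ?_⟩
  · obtain ⟨m, rfl⟩ := List.mem_iff_get.1 hp
    exact (hord m m x.2 y.2 x.1 y.1 hx hy).1.2 rfl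
  · exact List.pairwise_iff_get.2 fun m m' hmm' x hx y hy =>
      (hord m m' x.2 y.2 x.1 y.1 hx hy).2.2 hmm'

theorem IsFiberList.patternOf (h₀ : Initial v₀) (h : IsFiberList Set.univ (pairFract v₀ v) η) :
    PatternOf v₀ v η := by
  have hmin (y) (_ : y ∈ Set.univ) : pairFract v₀ v (0, false) ≤ pairFract v₀ v y :=
    (pairFract_zero_false h₀).trans_le (pairFract_nonneg v₀ v y)
  refine ⟨⟨?_, h.nonempty, h.pairwise_disjoint, h.mem_head_of_le (Set.mem_univ _) hmin,
    fun x => (h.mem_iff x).1 (Set.mem_univ x)⟩, fun _ _ _ _ _ _ hx hy => h.trichotomy_get hx hy⟩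
  simpa [mul_comm] using h.length_le_card

theorem exists_patternOf (h₀ : Initial v₀) (v : Val k) : ∃ η, PatternOf v₀ v η :=
  (IsFiberList.exists_univ (pairFract v₀ v)).imp fun _ h => h.patternOf h₀

end PairFract

section NowMeets

variable {k : ℕ} {v₀ v : Val k} {η : PatSeq k} {t : ℝ} {x : Fin (k + 1) × Bool}

/-- The index `0¹` shares its fractional part with another index, i.e. the pattern of `(v₀, v)` is
a split-pattern. -/
def NowMeets (v₀ v : Val k) : Prop :=
  ∃ x ≠ now k, pairFract v₀ v x = pairFract v₀ v (now k)

theorem PatternOf.isMergePat_iff (h : PatternOf v₀ v η) : IsMergePat η ↔ ¬NowMeets v₀ v := by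
  obtain ⟨A, P, B, rfl, hP, hA, -⟩ := h.1.exists_eq_append_cons
  have hmem (x) : x ∈ P ↔ pairFract v₀ v x = pairFract v₀ v (now k) :=
    h.isFiberList.mem_iff_eq (by simp) hP (Set.mem_univ x)
  simp only [isMergePat_append_cons_iff hA hP, Finset.eq_singleton_iff_unique_mem, hP, true_and,
    hmem, NowMeets, not_exists, not_and, not_imp_not, ne_eq]

theorem nowMeets_shift_iff :
    NowMeets v₀ (shift v t) ↔
      ∃ x ≠ now k, ∃ n : ℤ, t = pairFract v₀ v (now k) - pairFract v₀ v x + n := by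
  refine exists_congr fun x => and_congr_right fun hx => ?_
  have hfract : Int.fract (pairFract v₀ v x) = pairFract v₀ v x :=
    Int.fract_eq_self.2 ⟨pairFract_nonneg v₀ v x, pairFract_lt_one v₀ v x⟩
  rw [pairFract_shift_of_ne hx, pairFract_shift_now, ← hfract, Int.fract_eq_fract, hfract]
  exact exists_congr fun n => ⟨fun h => by linarith, fun h => by linarith⟩

theorem nowMeets_shift_fract (hx : x ≠ now k) :
    NowMeets v₀ (shift v (Int.fract (pairFract v₀ v (now k) - pairFract v₀ v x))) :=
  nowMeets_shift_iff.2 ⟨x, hx, -⌊pairFract v₀ v (now k) - pairFract v₀ v x⌋, by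
    push_cast; rw [← sub_eq_add_neg]; rfl⟩

theorem nowMeets_shift_one_sub_fract (hx : x ≠ now k) :
    NowMeets v₀ (shift v (1 - Int.fract (pairFract v₀ v x - pairFract v₀ v (now k)))) :=
  nowMeets_shift_iff.2 ⟨x, hx, 1 + ⌊pairFract v₀ v x - pairFract v₀ v (now k)⌋, by
    push_cast; rw [Int.fract]; ring⟩

end NowMeets

section Steps

variable {k : ℕ} {v₀ v : Val k} {η : PatSeq k} {δ : ℝ} {x : Fin (k + 1) × Bool}

theorem pairFract_shift_now_of_le (hδ : 0 ≤ δ) (hle : δ ≤ pairFract v₀ v (now k)) :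
    pairFract v₀ (shift v δ) (now k) = pairFract v₀ v (now k) - δ := by
  rw [pairFract_shift_now, Int.fract_eq_self]
  constructor <;> linarith [pairFract_lt_one v₀ v (now k)]

theorem eqOn_pairFract_shift :
    Set.EqOn (pairFract v₀ v) (pairFract v₀ (shift v δ)) (Set.univ \ {now k}) :=
  fun _ hx => (pairFract_shift_of_ne hx.2).symm

/-- The fractional part of `0¹` decreases as time passes, so until it first meets another index it
stays above those that were below it. -/
theorem pairFract_le_sub_of_forall_not_nowMeets
    (hmeets : ∀ t ∈ Set.Ico 0 δ, ¬NowMeets v₀ (shift v t))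
    (hx : x ≠ now k) (hle : pairFract v₀ v x ≤ pairFract v₀ v (now k)) :
    pairFract v₀ v x ≤ pairFract v₀ v (now k) - δ := by
  have hfract : Int.fract (pairFract v₀ v (now k) - pairFract v₀ v x) =
      pairFract v₀ v (now k) - pairFract v₀ v x := by
    rw [Int.fract_eq_self]
    constructor <;> linarith [pairFract_nonneg v₀ v x, pairFract_lt_one v₀ v (now k)]
  by_contra! hlt
  exact hmeets _ ⟨Int.fract_nonneg _, by linarith⟩ (nowMeets_shift_fract hx)

theorem pairFract_shift_now_of_forall_not_nowMeets (h₀ : Initial v₀) (hδ : 0 ≤ δ)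
    (hmeets : ∀ t ∈ Set.Ico 0 δ, ¬NowMeets v₀ (shift v t)) :
    pairFract v₀ (shift v δ) (now k) = pairFract v₀ v (now k) - δ := by
  refine pairFract_shift_now_of_le hδ ?_
  have hle := pairFract_le_sub_of_forall_not_nowMeets (x := (0, false)) hmeets (by simp)
    ((pairFract_zero_false h₀).trans_le (pairFract_nonneg v₀ v _))
  linarith [pairFract_nonneg v₀ v (0, false)]

theorem PatternOf.shift_stay (h₀ : Initial v₀) (h : PatternOf v₀ v η) (hδ : 0 ≤ δ)
    (hmeets : ∀ t ∈ Set.Icc 0 δ, ¬NowMeets v₀ (shift v t)) : PatternOf v₀ (shift v δ) η := by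
  have hnot : ¬NowMeets v₀ v := by simpa [shift_zero] using hmeets 0 ⟨le_rfl, hδ⟩
  have hIco : ∀ t ∈ Set.Ico 0 δ, ¬NowMeets v₀ (shift v t) := fun t ht =>
    hmeets t (Set.Ico_subset_Icc_self ht)
  have hnow := pairFract_shift_now_of_forall_not_nowMeets h₀ hδ hIco
  obtain ⟨A, P, B, rfl, hP, hA, hB⟩ := h.1.exists_eq_append_cons
  obtain rfl := (isMergePat_append_cons_iff hA hP).1 (h.isMergePat_iff.2 hnot)
  obtain ⟨hrest, hbelow, habove⟩ :=
    (IsFiberList.append_singleton_cons_iff (Set.mem_univ _)).1 h.isFiberList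
  refine IsFiberList.patternOf h₀ ((IsFiberList.append_singleton_cons_iff (Set.mem_univ _)).2
    ⟨hrest.congr eqOn_pairFract_shift, fun p hp x hx => ?_, fun p hp x hx => ?_⟩)
  · have hxne : x ≠ now k := fun hxnow => hA p hp (hxnow ▸ hx)
    have hle := pairFract_le_sub_of_forall_not_nowMeets hIco hxne (hbelow p hp x hx).le
    rw [← hnow, ← pairFract_shift_of_ne hxne] at hle
    exact hle.lt_of_ne fun heq => hmeets δ ⟨hδ, le_rfl⟩ ⟨x, hxne, heq⟩
  · have hxne : x ≠ now k := fun hxnow => hB p hp (hxnow ▸ hx)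
    rw [pairFract_shift_of_ne hxne, hnow]
    linarith [habove p hp x hx]

/-- The index `z` met at time `δ` lies in the block `Q` just below the now-position: that block is
still at or below `0¹`, while every earlier block is strictly below `Q`. -/
theorem PatternOf.pairFract_eq_of_mem_prev (h₀ : Initial v₀) {A B : PatSeq k}
    {Q : Finset (Fin (k + 1) × Bool)} (h : PatternOf v₀ v (A ++ Q :: {now k} :: B)) (hδ : 0 < δ)
    (hmeets : ∀ t ∈ Set.Ico 0 δ, ¬NowMeets v₀ (shift v t)) (hδ_meets : NowMeets v₀ (shift v δ))
    (hx : x ∈ Q) : pairFract v₀ v x = pairFract v₀ v (now k) - δ := by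
  obtain ⟨z, hzne, hz⟩ := hδ_meets
  rw [pairFract_shift_of_ne hzne, pairFract_shift_now_of_forall_not_nowMeets h₀ hδ.le hmeets] at hz
  obtain ⟨-, hmem, heq, hlt⟩ := h.isFiberList
  simp only [List.pairwise_append, List.pairwise_cons, List.mem_cons] at hlt
  have hxnow : pairFract v₀ v x < pairFract v₀ v (now k) := by grind
  have hxne : x ≠ now k := fun hxnow' => hxnow.ne (hxnow' ▸ rfl)
  have hle := pairFract_le_sub_of_forall_not_nowMeets hmeets hxne hxnow.le
  obtain ⟨p, hp, hzp⟩ := (hmem z).1 (Set.mem_univ z)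
  simp only [List.mem_append, List.mem_cons] at hp
  rcases hp with hpA | rfl | rfl | hpB
  · linarith [hlt.2.2 p hpA Q (.inl rfl) z hzp x hx]
  · linarith [heq p (by simp) x hx z hzp]
  · exact absurd (Finset.mem_singleton.1 hzp) hzne
  · linarith [hlt.2.1.2.1 p hpB (now k) (Finset.mem_singleton_self _) z hzp]

theorem PatternOf.shift_merge (h₀ : Initial v₀) (h : PatternOf v₀ v η) (hδ : 0 < δ)
    (hmeets : ∀ t ∈ Set.Ico 0 δ, ¬NowMeets v₀ (shift v t)) (hδ_meets : NowMeets v₀ (shift v δ)) :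
    PatternOf v₀ (shift v δ) (NextPat η) := by
  have hnot : ¬NowMeets v₀ v := by simpa [shift_zero] using hmeets 0 ⟨le_rfl, hδ⟩
  have hnow := pairFract_shift_now_of_forall_not_nowMeets h₀ hδ.le hmeets
  obtain ⟨A, Q, B, rfl, hQ_ne, hA, hQ⟩ := h.1.exists_eq_of_isMergePat (h.isMergePat_iff.2 hnot)
  have hfiber := h.isFiberList
  rw [List.append_cons, IsFiberList.append_singleton_cons_iff (Set.mem_univ _), List.append_assoc,
    List.singleton_append] at hfiber
  rw [nextPat_merge hA hQ]
  refine IsFiberList.patternOf h₀ ((IsFiberList.append_cons_iff_erase (Finset.mem_insert_self _ _)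
    (insert_ne_singleton hQ_ne hQ)).2 ⟨Set.mem_univ _, ?_, fun x hx => ?_⟩)
  · rw [Finset.erase_insert hQ]
    exact hfiber.1.congr eqOn_pairFract_shift
  · rcases Finset.mem_insert.1 hx with rfl | hxQ
    · rfl
    · rw [pairFract_shift_of_ne fun hxnow => hQ (hxnow ▸ hxQ), hnow]
      exact h.pairFract_eq_of_mem_prev h₀ hδ hmeets hδ_meets hxQ

theorem lt_one_sub_fract_of_forall_not_nowMeets
    (hmeets : ∀ t ∈ Set.Ioc 0 δ, ¬NowMeets v₀ (shift v t)) (hx : x ≠ now k) :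
    δ < 1 - Int.fract (pairFract v₀ v x - pairFract v₀ v (now k)) := by
  by_contra! hle
  exact hmeets _ ⟨by linarith [Int.fract_lt_one (pairFract v₀ v x - pairFract v₀ v (now k))], hle⟩
    (nowMeets_shift_one_sub_fract hx)

theorem pairFract_lt_sub_of_forall_not_nowMeets
    (hmeets : ∀ t ∈ Set.Ioc 0 δ, ¬NowMeets v₀ (shift v t))
    (hlt : pairFract v₀ v x < pairFract v₀ v (now k)) :
    pairFract v₀ v x < pairFract v₀ v (now k) - δ := by
  have hfract : Int.fract (pairFract v₀ v x - pairFract v₀ v (now k)) =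
      pairFract v₀ v x - pairFract v₀ v (now k) + 1 := by
    rw [← Int.fract_add_one, Int.fract_eq_self]
    constructor <;> linarith [pairFract_nonneg v₀ v x, pairFract_lt_one v₀ v (now k)]
  linarith [lt_one_sub_fract_of_forall_not_nowMeets hmeets
    (fun hxnow => hlt.ne (hxnow ▸ rfl) : x ≠ now k)]

theorem PatternOf.shift_split_head (h₀ : Initial v₀) {P : Finset (Fin (k + 1) × Bool)}
    {B : PatSeq k} (h : PatternOf v₀ v (P :: B)) (hP : now k ∈ P) (hP_ne : P ≠ {now k}) (hδ : 0 < δ)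
    (hmeets : ∀ t ∈ Set.Ioc 0 δ, ¬NowMeets v₀ (shift v t)) :
    PatternOf v₀ (shift v δ) (NextPat (P :: B)) := by
  have hf_now : pairFract v₀ v (now k) = 0 := by
    rw [← pairFract_zero_false (v := v) h₀]
    exact h.isFiberList.eq_of_mem P List.mem_cons_self _ hP _ h.1.2.2.2.1
  have hbelow (x) (hx : x ≠ now k) : pairFract v₀ v x < 1 - δ := by
    have hlt := lt_one_sub_fract_of_forall_not_nowMeets hmeets hx
    rw [hf_now, sub_zero, Int.fract_eq_self.2 ⟨pairFract_nonneg v₀ v x, pairFract_lt_one v₀ v x⟩]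
      at hlt
    linarith
  have hnow : pairFract v₀ (shift v δ) (now k) = 1 - δ := by
    have hδ_lt : δ < 1 := by
      linarith [hbelow (0, false) (by simp), pairFract_nonneg v₀ v (0, false)]
    rw [pairFract_shift_now, hf_now, zero_sub, ← Int.fract_one_add, ← sub_eq_add_neg]
    exact Int.fract_eq_self.2 ⟨by linarith, by linarith⟩
  obtain ⟨-, hrest, -⟩ :=
    (IsFiberList.append_cons_iff_erase (A := []) hP hP_ne).1 h.isFiberList
  rw [nextPat_split_head hP hP_ne, ← List.cons_append]
  refine IsFiberList.patternOf h₀ ((IsFiberList.append_singleton_cons_iff (Set.mem_univ _)).2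
    ⟨by simpa using hrest.congr eqOn_pairFract_shift, fun p hp x hx => ?_, by simp⟩)
  have hxne : x ≠ now k := ((hrest.mem_iff x).2 ⟨p, hp, hx⟩).2
  rw [pairFract_shift_of_ne hxne, hnow]
  exact hbelow x hxne

theorem PatternOf.shift_split_of_ne_nil (h₀ : Initial v₀) {P : Finset (Fin (k + 1) × Bool)}
    {A B : PatSeq k} (h : PatternOf v₀ v (A ++ P :: B)) (hP : now k ∈ P) (hP_ne : P ≠ {now k})
    (hA : ∀ p ∈ A, now k ∉ p) (hA_ne : A ≠ []) (hδ : 0 < δ)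
    (hmeets : ∀ t ∈ Set.Ioc 0 δ, ¬NowMeets v₀ (shift v t)) :
    PatternOf v₀ (shift v δ) (NextPat (A ++ P :: B)) := by
  obtain ⟨-, hrest, hP_eq⟩ := (IsFiberList.append_cons_iff_erase hP hP_ne).1 h.isFiberList
  obtain ⟨-, -, -, hlt⟩ := h.isFiberList
  simp only [List.pairwise_append, List.pairwise_cons, List.mem_cons] at hlt
  have hbelow (p) (hp : p ∈ A) (x) (hx : x ∈ p) :
      pairFract v₀ v x < pairFract v₀ v (now k) - δ :=
    pairFract_lt_sub_of_forall_not_nowMeets hmeets (hlt.2.2 p hp P (.inl rfl) x hx _ hP)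
  have hnow : pairFract v₀ (shift v δ) (now k) = pairFract v₀ v (now k) - δ := by
    obtain ⟨p, hp⟩ := List.exists_mem_of_ne_nil A hA_ne
    obtain ⟨x, hx⟩ := h.1.2.1 p (List.mem_append_left _ hp)
    exact pairFract_shift_now_of_le hδ.le
      (by linarith [hbelow p hp x hx, pairFract_nonneg v₀ v x])
  rw [nextPat_split hA hA_ne hP hP_ne]
  refine IsFiberList.patternOf h₀ ((IsFiberList.append_singleton_cons_iff (Set.mem_univ _)).2
    ⟨hrest.congr eqOn_pairFract_shift, fun p hp x hx => ?_, fun p hp x hx => ?_⟩)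
  · have hxne : x ≠ now k := ((hrest.mem_iff x).2 ⟨p, List.mem_append_left _ hp, hx⟩).2
    rw [pairFract_shift_of_ne hxne, hnow]
    exact hbelow p hp x hx
  · have hxne : x ≠ now k := ((hrest.mem_iff x).2 ⟨p, List.mem_append_right _ hp, hx⟩).2
    rw [pairFract_shift_of_ne hxne, hnow]
    rcases List.mem_cons.1 hp with rfl | hpB
    · linarith [hP_eq x (Finset.mem_of_mem_erase hx)]
    · linarith [hlt.2.1.1 p hpB _ hP x hx]

theorem PatternOf.shift_split (h₀ : Initial v₀) (h : PatternOf v₀ v η) (hδ : 0 < δ)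
    (hmeets_zero : NowMeets v₀ v) (hmeets : ∀ t ∈ Set.Ioc 0 δ, ¬NowMeets v₀ (shift v t)) :
    PatternOf v₀ (shift v δ) (NextPat η) := by
  obtain ⟨A, P, B, rfl, hP, hP_ne, hA, -⟩ :=
    h.1.exists_eq_of_not_isMergePat fun hmerge => h.isMergePat_iff.1 hmerge hmeets_zero
  rcases eq_or_ne A [] with rfl | hA_ne
  · exact h.shift_split_head h₀ hP hP_ne hδ hmeets
  · exact h.shift_split_of_ne_nil h₀ hP hP_ne hA hA_ne hδ hmeets

end Steps

section MeetingTimes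

variable {k : ℕ}

/-- The delays after which `0¹` shares its fractional part with another index. -/
def meetingTimes (v₀ v : Val k) : Set ℝ :=
  {t | NowMeets v₀ (shift v t)}

theorem finite_meetingTimes_inter_Icc (v₀ v : Val k) (s t : ℝ) :
    (meetingTimes v₀ v ∩ Set.Icc s t).Finite := by
  refine ((Set.finite_univ.image2
    (fun x (n : ℤ) => pairFract v₀ v (now k) - pairFract v₀ v x + n)
    (Set.finite_Icc ⌊s - 1⌋ ⌈t + 1⌉))).subset ?_
  rintro _ ⟨hmeets, hs, ht⟩
  obtain ⟨x, -, n, rfl⟩ := nowMeets_shift_iff.1 hmeets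
  have hx_nonneg := pairFract_nonneg v₀ v x
  have hx_lt := pairFract_lt_one v₀ v x
  have hnow_nonneg := pairFract_nonneg v₀ v (now k)
  have hnow_lt := pairFract_lt_one v₀ v (now k)
  refine ⟨x, Set.mem_univ x, n, ⟨?_, ?_⟩, rfl⟩
  · exact Int.cast_le.1 ((Int.floor_le (s - 1)).trans (by linarith))
  · exact Int.cast_le.1 (le_trans (by linarith) (Int.le_ceil (t + 1)))

theorem ncard_meetingTimes_inter_Ico_le (v₀ v : Val k) :
    (meetingTimes v₀ v ∩ Set.Ico 0 1).ncard ≤ 2 * k + 1 := by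
  let time x := Int.fract (pairFract v₀ v (now k) - pairFract v₀ v x)
  have hsub : meetingTimes v₀ v ∩ Set.Ico 0 1 ⊆ time '' {now k}ᶜ := by
    rintro t ⟨hmeets, ht⟩
    obtain ⟨x, hx, n, htx⟩ := nowMeets_shift_iff.1 hmeets
    refine ⟨x, hx, ?_⟩
    rw [← Int.fract_eq_self.2 ht, Int.fract_eq_fract]
    exact ⟨-n, by push_cast; linarith⟩
  calc (meetingTimes v₀ v ∩ Set.Ico 0 1).ncard
      ≤ (time '' {now k}ᶜ).ncard := Set.ncard_le_ncard hsub
    _ ≤ ({now k}ᶜ : Set (Fin (k + 1) × Bool)).ncard := Set.ncard_image_le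
    _ = 2 * k + 1 := by
      rw [Set.ncard_compl, Set.ncard_singleton, Nat.card_eq_fintype_card,
        Fintype.card_prod, Fintype.card_fin, Fintype.card_bool]
      lia

end MeetingTimes

section PatternChanges

variable {k n m : ℕ} {v₀ v : Val k} {s t δ ε : ℝ}

theorem OneChange.nowMeets_shift_iff (h : OneChange v₀ v δ) :
    NowMeets v₀ (shift v δ) ↔ ¬NowMeets v₀ v := by
  obtain ⟨η, _, hη, hη', rfl, -⟩ := h
  rw [← hη.isMergePat_iff, ← not_iff_not, ← hη'.isMergePat_iff, hη.1.isMergePat_nextPat_iff]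

theorem oneChange_of_merge (h₀ : Initial v₀) (hδ : 0 < δ)
    (hmeets : ∀ t ∈ Set.Ico 0 δ, ¬NowMeets v₀ (shift v t)) (hδ_meets : NowMeets v₀ (shift v δ)) :
    OneChange v₀ v δ := by
  obtain ⟨η, hη⟩ := exists_patternOf h₀ v
  exact ⟨η, NextPat η, hη, hη.shift_merge h₀ hδ hmeets hδ_meets, rfl, .inl fun ε hε hεδ =>
    hη.shift_stay h₀ hε.le fun t ht => hmeets t ⟨ht.1, ht.2.trans_lt hεδ⟩⟩

theorem oneChange_of_split (h₀ : Initial v₀) (hδ : 0 < δ) (hmeets_zero : NowMeets v₀ v)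
    (hmeets : ∀ t ∈ Set.Ioc 0 δ, ¬NowMeets v₀ (shift v t)) : OneChange v₀ v δ := by
  obtain ⟨η, hη⟩ := exists_patternOf h₀ v
  exact ⟨η, NextPat η, hη, hη.shift_split h₀ hδ hmeets_zero hmeets, rfl, .inr fun ε hε hεδ =>
    hη.shift_split h₀ hε hmeets_zero fun t ht => hmeets t ⟨ht.1, ht.2.trans hεδ.le⟩⟩

theorem OneChange.nChanges_one (h : OneChange v₀ v δ) (hδ : 0 < δ) : NChanges v₀ v 1 δ :=
  ⟨fun _ => δ, fun _ _ => hδ, by simp, fun j hj => by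
    obtain rfl : j = 0 := by lia
    simpa [shift_zero] using h⟩

theorem NChanges.add (h : NChanges v₀ v n δ) (h' : NChanges v₀ (shift v δ) m ε) :
    NChanges v₀ v (n + m) (δ + ε) := by
  obtain ⟨d, hd_pos, rfl, hd⟩ := h
  obtain ⟨e, he_pos, rfl, he⟩ := h'
  let de j := if j < n then d j else e (j - n)
  have hde_left (j) (hj : j < n) : de j = d j := if_pos hj
  have hde_right (j) : de (n + j) = e j := by simp [de]
  have hsum_left (j) (hj : j ≤ n) : ∑ i ∈ Finset.range j, de i = ∑ i ∈ Finset.range j, d i :=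
    Finset.sum_congr rfl fun i hi => hde_left i ((Finset.mem_range.1 hi).trans_le hj)
  have hsum_right (j) : ∑ i ∈ Finset.range (n + j), de i =
      ∑ i ∈ Finset.range n, d i + ∑ i ∈ Finset.range j, e i := by
    simp only [Finset.sum_range_add, hsum_left n le_rfl, hde_right]
  refine ⟨de, fun j hj => ?_, hsum_right m, fun j hj => ?_⟩
  · rcases lt_or_ge j n with hjn | hnj
    · rw [hde_left j hjn]
      exact hd_pos j hjn
    · obtain ⟨i, rfl⟩ := Nat.exists_eq_add_of_le hnj
      rw [hde_right]
      exact he_pos i (by lia)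
  · rcases lt_or_ge j n with hjn | hnj
    · rw [hde_left j hjn, hsum_left j hjn.le]
      exact hd j hjn
    · obtain ⟨i, rfl⟩ := Nat.exists_eq_add_of_le hnj
      rw [hde_right, hsum_right, ← shift_shift]
      exact he i (by lia)

theorem NChanges.le_four_mul_add_three (h : NChanges v₀ v n δ) (hδ : δ ≤ 1) : n ≤ 4 * k + 3 := by
  classical
  obtain ⟨d, hd_pos, hsum, hd⟩ := h
  let T j := ∑ i ∈ Finset.range j, d i
  have hT_mono : StrictMonoOn T (Set.Iic n) := strictMonoOn_sum_range hd_pos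
  have hT_mem (j) (hj : j < n) : T j ∈ Set.Ico 0 1 := by
    refine ⟨?_, (hT_mono hj.le (Set.mem_Iic.2 le_rfl) hj).trans_le (hsum.trans_le hδ)⟩
    exact Finset.sum_nonneg fun i hi => (hd_pos i ((Finset.mem_range.1 hi).trans hj)).le
  have halt (j) (hj : j + 1 < n) : T (j + 1) ∈ meetingTimes v₀ v ↔ T j ∉ meetingTimes v₀ v := by
    have hstep := (hd j (by lia)).nowMeets_shift_iff
    rwa [shift_shift, ← Finset.sum_range_succ] at hstep
  have hcount : ((Finset.range n).filter (T · ∈ meetingTimes v₀ v)).card ≤ 2 * k + 1 := by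
    rw [← Set.ncard_coe_finset]
    refine (Set.ncard_le_ncard_of_injOn T (fun j hj => ?_) ?_ ?_).trans
      (ncard_meetingTimes_inter_Ico_le v₀ v)
    · obtain ⟨hjn, hj_meets⟩ := Finset.mem_filter.1 hj
      exact ⟨hj_meets, hT_mem j (Finset.mem_range.1 hjn)⟩
    · exact hT_mono.injOn.mono fun j hj => (Finset.mem_range.1 (Finset.mem_filter.1 hj).1).le
    · exact (finite_meetingTimes_inter_Icc v₀ v 0 1).subset
        (Set.inter_subset_inter_right _ Set.Ico_subset_Icc_self)
  have hn_le := le_two_mul_card_filter_add_one_of_alternating (P := (T · ∈ meetingTimes v₀ v)) halt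
  lia

/-- There is at least one pattern change between the delays `s` and `t`. -/
def HasChanges (v₀ v : Val k) (s t : ℝ) : Prop :=
  ∃ n, 1 ≤ n ∧ NChanges v₀ (shift v s) n (t - s)

instance : IsTrans ℝ (HasChanges v₀ v) where
  trans r s t := by
    rintro ⟨n, hn, hrs⟩ ⟨m, -, hst⟩
    refine ⟨n + m, by lia, ?_⟩
    rw [← sub_add_sub_cancel' s r t]
    exact hrs.add (by rwa [shift_shift, add_sub_cancel])

theorem hasChanges_of_oneChange (hst : s < t) (h : OneChange v₀ (shift v s) (t - s)) :
    HasChanges v₀ v s t :=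
  ⟨1, le_rfl, h.nChanges_one (sub_pos.2 hst)⟩

theorem hasChanges_of_forall_Ioc (h₀ : Initial v₀) (hst : s < t) (hs : s ∈ meetingTimes v₀ v)
    (hmeets : ∀ r ∈ Set.Ioc s t, r ∉ meetingTimes v₀ v) : HasChanges v₀ v s t := by
  refine hasChanges_of_oneChange hst (oneChange_of_split h₀ (sub_pos.2 hst) hs fun r hr => ?_)
  rw [shift_shift]
  exact hmeets (s + r) ⟨by linarith [hr.1], by linarith [hr.2]⟩

theorem hasChanges_of_forall_Ico (h₀ : Initial v₀) (hst : s < t) (ht : t ∈ meetingTimes v₀ v)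
    (hmeets : ∀ r ∈ Set.Ico s t, r ∉ meetingTimes v₀ v) : HasChanges v₀ v s t := by
  refine hasChanges_of_oneChange hst
    (oneChange_of_merge h₀ (sub_pos.2 hst) (fun r hr => ?_) ?_)
  · rw [shift_shift]
    exact hmeets (s + r) ⟨by linarith [hr.1], by linarith [hr.2]⟩
  · rwa [shift_shift, add_sub_cancel]

theorem hasChanges_of_inter_Icc_eq_singleton (h₀ : Initial v₀) (hst : s < t) {c : ℝ}
    (hc : meetingTimes v₀ v ∩ Set.Icc s t = {c}) : HasChanges v₀ v s t := by
  obtain ⟨hc_meets, hsc, hct⟩ : c ∈ meetingTimes v₀ v ∩ Set.Icc s t := hc ▸ rfl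
  have hnot (r) (hr : r ∈ Set.Icc s t) (hrc : r ≠ c) : r ∉ meetingTimes v₀ v := fun hr_meets =>
    hrc (hc.subset ⟨hr_meets, hr⟩)
  have hleft (hsc : s < c) : HasChanges v₀ v s c := hasChanges_of_forall_Ico h₀ hsc hc_meets
    fun r hr => hnot r ⟨hr.1, hr.2.le.trans hct⟩ hr.2.ne
  have hright (hct : c < t) : HasChanges v₀ v c t := hasChanges_of_forall_Ioc h₀ hct hc_meets
    fun r hr => hnot r ⟨hsc.trans hr.1.le, hr.2⟩ hr.1.ne'
  rcases hsc.eq_or_lt with rfl | hsc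
  · exact hright hst
  rcases hct.eq_or_lt with rfl | hct
  · exact hleft hst
  · exact _root_.trans (hleft hsc) (hright hct)

theorem exists_nChanges_of_one_le (h₀ : Initial v₀) (v : Val k) (hδ : 1 ≤ δ) :
    ∃ n, 1 ≤ n ∧ NChanges v₀ v n δ := by
  have hmeets : (meetingTimes v₀ v ∩ Set.Icc 0 δ).Nonempty :=
    ⟨_, nowMeets_shift_fract (x := (0, false)) (by simp), Int.fract_nonneg _,
      (Int.fract_lt_one _).le.trans hδ⟩
  have hchanges : HasChanges v₀ v 0 δ :=
    rel_of_finite_inter_Icc (finite_meetingTimes_inter_Icc v₀ v)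
      (fun _ _ _ hst => hasChanges_of_inter_Icc_eq_singleton h₀ hst) (by linarith) hmeets
  simpa only [HasChanges, shift_zero, sub_zero] using hchanges

theorem nowMeets_of_fract_eq_zero (h₀ : Initial v₀) {i : Fin (k + 1)} (hi : Int.fract (v i) = 0) :
    NowMeets v₀ v := by
  rcases eq_or_ne i 0 with rfl | hi_ne
  · refine ⟨(0, false), by simp, ?_⟩
    rw [pairFract_zero_false h₀]
    simp [pairFract, bval, relFract_zero, Int.fract_neg_eq_zero.2 hi]
  · refine ⟨(i, true), by simp [hi_ne], ?_⟩
    simp only [pairFract, bval, relFract_zero, relFract_of_ne_zero v hi_ne]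
    exact Int.fract_eq_fract.2 ⟨⌊v i⌋, by linarith [Int.floor_add_fract (v i)]⟩

theorem NoChange.forall_not_nowMeets (h : NoChange v₀ v δ) (hδ : 0 < δ) :
    ∀ t ∈ Set.Icc 0 δ, ¬NowMeets v₀ (shift v t) := by
  obtain ⟨η, -, hη⟩ := h
  suffices hmerge : IsMergePat η from fun t ht => (hη t ht.1 ht.2).isMergePat_iff.1 hmerge
  by_contra hsplit
  refine Set.Icc_infinite hδ ((finite_meetingTimes_inter_Icc v₀ v 0 δ).subset fun t ht => ⟨?_, ht⟩)
  exact not_not.1 (mt (hη t ht.1 ht.2).isMergePat_iff.2 hsplit)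

theorem NoChange.intPart_shift (h₀ : Initial v₀) (hδ : 0 ≤ δ) (h : NoChange v₀ v δ) :
    intPart v = intPart (shift v δ) := by
  rcases hδ.eq_or_lt with rfl | hδ_pos
  · rw [shift_zero]
  refine funext fun i => congrArg Int.toNat (floor_eq_floor_add_of_forall_fract_ne_zero hδ ?_)
  exact fun t ht hfract => h.forall_not_nowMeets hδ_pos t ht (nowMeets_of_fract_eq_zero h₀ hfract)

end PatternChanges

/-- Lemma `maxpatternchange`. For any initialized pair `(v₀,v)` and
`δ ≥ 0`: (1) if `δ ≤ 1` then `v` has at most `4(k+1)` pattern changes for `δ`;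
(2) if `δ ≥ 1` then `v` has at least one pattern change for `δ`;
(3) if `v` has no pattern change for `δ` then `int(v) = int(v+δ)`. -/
theorem max_pattern_change (k : ℕ) (hk : 1 ≤ k) (v₀ v : Val k)
    (hv₀ : IsVal v₀) (hv : IsVal v) (h0 : Initial v₀)
    (δ : ℝ) (hδ : 0 ≤ δ) :
    (δ ≤ 1 → ∀ n : ℕ, NChanges v₀ v n δ → n ≤ 4 * (k + 1)) ∧
    (1 ≤ δ → ∃ n : ℕ, 1 ≤ n ∧ NChanges v₀ v n δ) ∧
    (NoChange v₀ v δ → intPart v = intPart (shift v δ)) := by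
  refine ⟨fun hδ1 n hn => ?_, exists_nChanges_of_one_le h0 v, NoChange.intPart_shift h0 hδ⟩
  have hn_le : n ≤ 4 * k + 3 := hn.le_four_mul_add_three hδ1
  lia

end PTApaper
end

section
/- For any initialized pair (v₀,v) of clock valuations and any set of clock resets r ⊆ K⁺: reset_r([(v₀,v)], int(v)) = ([(v₀,v↓_r)], int(v↓_r)). -/
open scoped BigOperators

namespace PTApaper

/-!
The pattern of `(v₀, v)` is the increasing list of the level sets of the map
`φ : i^b ↦ fract(rel(v_b))(i)`, and such a list is determined by `φ`. Let `g` send `j¹` to `0¹` for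
`j ∈ r` and fix every other index. A reset clock takes the relative fractional part of clock `0`,
so the pair `(v₀, v↓_r)` has the map `φ ∘ g`, whose level sets are the nonempty preimages under `g`
of those of `φ`. The preimage of a block `p` is `p ∪ r¹` if `0¹ ∈ p` and `p ∖ r¹` otherwise, which
is what `reset_r` computes.
-/

section LevelSets

variable {α β γ : Type*}

/-- `L` lists the nonempty level sets of `f` in strictly increasing order of the value of `f`.
For `f` the relative fractional part of an index, this is the ordering content of a pattern. -/
structure IsLevelSetList [Preorder β] (f : α → β) (L : List (Finset α)) : Prop where
  nonempty : ∀ p ∈ L, p.Nonempty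
  mem_iff : ∀ p ∈ L, ∀ x ∈ p, ∀ y, y ∈ p ↔ f y = f x
  pairwise_lt : L.Pairwise fun p q => ∀ x ∈ p, ∀ y ∈ q, f x < f y
  exists_mem : ∀ x, ∃ p ∈ L, x ∈ p

namespace IsLevelSetList

variable [Preorder β] {f : α → β} {L L' : List (Finset α)}

theorem pairwise_disjoint (h : IsLevelSetList f L) : L.Pairwise Disjoint :=
  h.pairwise_lt.imp fun hpq =>
    Finset.disjoint_left.2 fun x hxp hxq => lt_irrefl _ (hpq x hxp x hxq)

theorem nodup (h : IsLevelSetList f L) : L.Nodup :=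
  h.pairwise_disjoint.imp_of_mem fun hp _ hpq =>
    hpq.ne (Finset.nonempty_iff_ne_empty.1 (h.nonempty _ hp))

theorem length_le_card [Fintype α] (h : IsLevelSetList f L) : L.length ≤ Fintype.card α := by
  choose x hx using fun m : Fin L.length => h.nonempty _ (L.get_mem m)
  have hx_mono : StrictMono (f ∘ x) := fun m m' hm =>
    List.pairwise_iff_get.1 h.pairwise_lt m m' hm _ (hx m) _ (hx m')
  have hx_inj : Function.Injective x := hx_mono.injective.of_comp
  simpa using Fintype.card_le_of_injective x hx_inj

theorem subset (h : IsLevelSetList f L) (h' : IsLevelSetList f L') : L ⊆ L' := by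
  intro p hp
  obtain ⟨x, hxp⟩ := h.nonempty p hp
  obtain ⟨q, hq, hxq⟩ := h'.exists_mem x
  have hpq : p = q := by
    ext y
    rw [h.mem_iff p hp x hxp, h'.mem_iff q hq x hxq]
  exact hpq ▸ hq

theorem unique (h : IsLevelSetList f L) (h' : IsLevelSetList f L') : L = L' := by
  have hperm : L.Perm L' := (List.perm_ext_iff_of_nodup h.nodup h'.nodup).2 fun _ =>
    ⟨fun hp => h.subset h' hp, fun hp => h'.subset h hp⟩
  refine hperm.eq_of_pairwise (fun p q hp hq hpq hqp => ?_) h.pairwise_lt h'.pairwise_lt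
  obtain ⟨x, hx⟩ := h.nonempty p hp
  obtain ⟨y, hy⟩ := h'.nonempty q hq
  exact absurd (hpq x hx y hy) (hqp y hy x hx).asymm

theorem eq_and_lt_iff (h : IsLevelSetList f L) {m m' : Fin L.length} {x y : α}
    (hx : x ∈ L.get m) (hy : y ∈ L.get m') : (f x = f y ↔ m = m') ∧ (f x < f y ↔ m < m') := by
  have hlt := List.pairwise_iff_get.1 h.pairwise_lt
  rcases lt_trichotomy m m' with hm | rfl | hm
  · have hxy := hlt m m' hm x hx y hy
    simp only [hxy, hxy.ne, hm, hm.ne, iff_self, and_self]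
  · have hxy := (h.mem_iff _ (L.get_mem m) y hy x).1 hx
    simp only [hxy, lt_self_iff_false, iff_self, and_self]
  · have hyx := hlt m' m hm y hy x hx
    simp only [hyx.ne', hyx.not_gt, hm.ne', hm.not_gt, iff_self, and_self]

end IsLevelSetList

/-- The nonempty preimages under `g` of the blocks of `L`, in the same order. Resetting clocks
acts on patterns in this way, with `g` redirecting the reset indices to `0¹`. -/
def preimageList [Fintype α] [DecidableEq α] [DecidableEq β] (g : α → β)
    (L : List (Finset β)) : List (Finset α) :=
  (L.map fun p => ({x | g x ∈ p} : Finset α)).filter fun p => decide (p ≠ ∅)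

section Preimage

variable [Fintype α] [DecidableEq α] [DecidableEq β] {g : α → β} {L : List (Finset β)}

theorem mem_preimageList_iff {q : Finset α} :
    q ∈ preimageList g L ↔ q.Nonempty ∧ ∃ p ∈ L, ({x | g x ∈ p} : Finset α) = q := by
  simp only [preimageList, List.mem_filter, List.mem_map, decide_eq_true_eq,
    Finset.nonempty_iff_ne_empty, and_comm]

theorem mem_getD_zero_preimageList {a : α} (ha : g a ∈ L.getD 0 ∅) :
    a ∈ (preimageList g L).getD 0 ∅ := by
  cases L with
  | nil => simp at ha
  | cons p L =>
    replace ha : a ∈ ({x | g x ∈ p} : Finset α) := by simpa using ha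
    have hne : ({x | g x ∈ p} : Finset α) ≠ ∅ := Finset.ne_empty_of_mem ha
    rw [preimageList, List.map_cons, List.filter_cons_of_pos (by simpa using hne)]
    exact ha

theorem IsLevelSetList.preimageList [Preorder γ] {f : β → γ} (h : IsLevelSetList f L) :
    IsLevelSetList (f ∘ g) (preimageList g L) where
  nonempty q hq := (mem_preimageList_iff.1 hq).1
  mem_iff q hq x hx y := by
    obtain ⟨-, p, hp, rfl⟩ := mem_preimageList_iff.1 hq
    simp only [Finset.mem_filter_univ] at hx ⊢
    exact h.mem_iff p hp (g x) hx (g y)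
  pairwise_lt := by
    refine List.Pairwise.filter _ (List.pairwise_map.2 (h.pairwise_lt.imp ?_))
    simp only [Finset.mem_filter_univ]
    exact fun hpq x hx y hy => hpq (g x) hx (g y) hy
  exists_mem x := by
    obtain ⟨p, hp, hx⟩ := h.exists_mem (g x)
    have hx' : x ∈ ({x | g x ∈ p} : Finset α) := (Finset.mem_filter_univ x).2 hx
    exact ⟨_, mem_preimageList_iff.2 ⟨⟨x, hx'⟩, p, hp, rfl⟩, hx'⟩

end Preimage

theorem filter_piecewise_const_mem [Fintype α] [DecidableEq α] (s p : Finset α) (a : α) :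
    ({x | s.piecewise (fun _ => a) id x ∈ p} : Finset α) = if a ∈ p then p ∪ s else p \ s := by
  ext x
  rw [Finset.mem_filter_univ]
  by_cases hx : x ∈ s <;> split_ifs with ha <;> simp [hx, ha]

theorem eq_findIdx_mem_iff [DecidableEq α] {L : List (Finset α)} (hL : L.Pairwise Disjoint)
    (a : α) {m : ℕ} (hm : m < L.length) :
    m = L.findIdx (fun p => decide (a ∈ p)) ↔ a ∈ L[m] := by
  rw [eq_comm, List.findIdx_eq hm, decide_eq_true_iff, and_iff_left_iff_imp]
  intro ham j hjm
  have hdisj := List.pairwise_iff_getElem.1 hL j m (hjm.trans hm) hm hjm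
  exact decide_eq_false (Finset.disjoint_right.1 hdisj ham)

end LevelSets

section Patterns

variable {k : ℕ} {v₀ v : Val k} {η η' : PatSeq k} {r : Finset (Fin (k + 1))}

/-- The map `i^b ↦ fract(rel(v_b))(i)` on `K⁰ ∪ K¹`, whose level sets are the blocks of the
pattern of `(v₀, v)`. -/
noncomputable def pairRelFract (v₀ v : Val k) (x : Fin (k + 1) × Bool) : ℝ :=
  relFract (bval v₀ v x.2) x.1

theorem patternOf_iff :
    PatternOf v₀ v η ↔
      IsLevelSetList (pairRelFract v₀ v) η ∧ ((0 : Fin (k + 1)), false) ∈ η.getD 0 ∅ := by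
  constructor
  · rintro ⟨⟨-, hne, -, hzero, hcover⟩, hord⟩
    refine ⟨⟨hne, fun p hp x hx y => ?_, ?_, hcover⟩, hzero⟩
    · obtain ⟨m, rfl⟩ := List.get_of_mem hp
      refine ⟨fun hy => (hord m m _ _ _ _ hy hx).1.2 rfl, fun hxy => ?_⟩
      obtain ⟨q, hq, hy⟩ := hcover y
      obtain ⟨m', rfl⟩ := List.get_of_mem hq
      exact (hord m' m _ _ _ _ hy hx).1.1 hxy ▸ hy
    · exact List.pairwise_iff_get.2 fun m m' hm x hx y hy => (hord m m' _ _ _ _ hx hy).2.2 hm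
  · rintro ⟨h, hzero⟩
    have hlen : η.length ≤ 2 * (k + 1) := by
      simpa [mul_comm] using h.length_le_card
    exact ⟨⟨hlen, h.nonempty, h.pairwise_disjoint, hzero, h.exists_mem⟩,
      fun m m' b b' i i' hi hi' => h.eq_and_lt_iff hi hi'⟩

theorem PatternOf.unique (hη : PatternOf v₀ v η) (hη' : PatternOf v₀ v η') : η = η' :=
  (patternOf_iff.1 hη).1.unique (patternOf_iff.1 hη').1

/-- The map on `K⁰ ∪ K¹` that sends `j¹` to `0¹` for `j ∈ r` and fixes every other index: after
a reset of `r`, each index has the relative fractional part its image had before. -/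
def redirectToNow (r : Finset (Fin (k + 1))) : Fin (k + 1) × Bool → Fin (k + 1) × Bool :=
  (r.image fun j => (j, true)).piecewise (fun _ => (0, true)) id

theorem relFract_resetVal (hr : (0 : Fin (k + 1)) ∉ r) (v : Val k) (i : Fin (k + 1)) :
    relFract (resetVal r v) i = if i ∈ r then relFract v 0 else relFract v i := by
  split_ifs with hi
  · have hi0 : i ≠ 0 := ne_of_mem_of_not_mem hi hr
    simp [relFract, resetVal, hi, hr, hi0]
  · simp [relFract, resetVal, hi, hr]

theorem pairRelFract_resetVal (hr : (0 : Fin (k + 1)) ∉ r) (v₀ v : Val k) :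
    pairRelFract v₀ (resetVal r v) = pairRelFract v₀ v ∘ redirectToNow r := by
  funext ⟨i, b⟩
  cases b
  · simp [pairRelFract, redirectToNow, Finset.piecewise, bval]
  · by_cases hi : i ∈ r <;>
      simp [pairRelFract, redirectToNow, Finset.piecewise, bval, relFract_resetVal hr, hi]

theorem resetPat_eq_preimageList (hη : η.Pairwise Disjoint) (r : Finset (Fin (k + 1))) :
    ResetPat r η = preimageList (redirectToNow r) η := by
  have hpreimage (p : Finset (Fin (k + 1) × Bool)) :
      ({x | redirectToNow r x ∈ p} : Finset (Fin (k + 1) × Bool)) =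
        if (0, true) ∈ p then p ∪ r.image (fun j => (j, true))
        else p \ r.image (fun j => (j, true)) :=
    filter_piecewise_const_mem _ p (0, true)
  simp only [ResetPat, preimageList, hpreimage]
  congr 1
  refine List.ext_getElem (by simp) fun m _ hm => ?_
  rw [List.length_map] at hm
  simp only [List.getElem_mapIdx, List.getElem_map, nowIdx, eq_findIdx_mem_iff hη _ hm]

theorem PatternOf.resetPat (hη : PatternOf v₀ v η) (hr : (0 : Fin (k + 1)) ∉ r) :
    PatternOf v₀ (resetVal r v) (ResetPat r η) := by
  obtain ⟨hlevel, hzero⟩ := patternOf_iff.1 hη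
  rw [patternOf_iff, pairRelFract_resetVal hr, resetPat_eq_preimageList hlevel.pairwise_disjoint]
  refine ⟨hlevel.preimageList, mem_getD_zero_preimageList ?_⟩
  simpa [redirectToNow, Finset.piecewise] using hzero

theorem resetD_intPart (r : Finset (Fin (k + 1))) (v : Val k) :
    resetD r (intPart v) = intPart (resetVal r v) := by
  funext j
  by_cases hj : j ∈ r <;> simp [resetD, intPart, resetVal, hj]

theorem reset_pattern_change_general (_hv₀ : IsVal v₀) (_hv : IsVal v)
    (hr : (0 : Fin (k + 1)) ∉ r) (hη : PatternOf v₀ v η) :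
    resetPair r η (intPart v) = (η', intPart (resetVal r v)) ↔
      PatternOf v₀ (resetVal r v) η' := by
  rw [resetPair, resetD_intPart, Prod.mk.injEq, and_iff_left rfl]
  constructor
  · rintro rfl
    exact hη.resetPat hr
  · exact (hη.resetPat hr).unique

end Patterns

/-- Lemma `resetpatternchange`. For any initialized pair `(v₀,v)` and
any set of clock resets `r ⊆ K⁺`: `reset_r([(v₀,v)], int(v)) = ([(v₀,v↓_r)], int(v↓_r))`. -/
theorem reset_pattern_change (k : ℕ) (hk : 1 ≤ k) (v₀ v : Val k)
    (hv₀ : IsVal v₀) (hv : IsVal v) (h0 : Initial v₀)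
    (r : Finset (Fin (k+1))) (hr : (0 : Fin (k+1)) ∉ r)
    (η η' : PatSeq k) (hη : PatternOf v₀ v η) (hη' : PatternOf v₀ (resetVal r v) η') :
    resetPair r η (intPart v) = (η', intPart (resetVal r v)) :=
  (reset_pattern_change_general hv₀ hv hr hη).2 hη'

end PTApaper
end

section
/- For any initialized pair (v₀,v) of clock valuations, any pattern η such that (v₀,v) has pattern η, and any clock constraint c: v satisfies c iff int(v) satisfies c^η. -/
open scoped BigOperators

namespace PTApaper

/-!
Write `r = fract(rel(v))(0)`. Passing to the relative representation rotates all fractional parts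
by `r` along the circle `ℝ/ℤ`, so `fract(v(i)) = fract(fract(rel(v))(i) - r)`: the order of the
fractional parts of `v` is the order of those of `rel(v)`, read cyclically starting from `r`. The
pattern records the latter order, and `r` sits at the position of `0¹`, so the pattern determines
the former. An atomic constraint then compares reals lexicographically, first by integral and then
by fractional part.
-/

section Fract

variable {R : Type*} [CommRing R] [LinearOrder R] [IsStrictOrderedRing R] [FloorRing R]

theorem fract_sub_eq_ite {x r : R} (hx : x ∈ Set.Ico 0 1) (hr : r ∈ Set.Ico 0 1) :
    Int.fract (x - r) = if x < r then x - r + 1 else x - r := by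
  obtain ⟨hx0, hx1⟩ := hx
  obtain ⟨hr0, hr1⟩ := hr
  split_ifs with hxr
  · rw [← Int.fract_add_one, Int.fract_eq_self]
    constructor <;> linarith
  · rw [Int.fract_eq_self]
    constructor <;> linarith

theorem fract_sub_lt_fract_sub_iff {x y r : R} (hx : x ∈ Set.Ico 0 1) (hy : y ∈ Set.Ico 0 1)
    (hr : r ∈ Set.Ico 0 1) :
    Int.fract (y - r) < Int.fract (x - r) ↔
      (x < r ∧ r ≤ y) ∨ (y < x ∧ x < r) ∨ (r ≤ y ∧ y < x) := by
  rw [fract_sub_eq_ite hx hr, fract_sub_eq_ite hy hr]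
  obtain ⟨hx0, hx1⟩ := hx
  obtain ⟨hy0, hy1⟩ := hy
  rcases lt_or_ge x r with hxr | hrx <;> rcases lt_or_ge y r with hyr | hry
  · simp [hxr, hyr, hyr.not_ge]
  · have : y - r < x - r + 1 := by linarith
    simp [hxr, hry, hry.not_gt, this]
  · have : ¬ y - r + 1 < x - r := by linarith
    simp [hrx.not_gt, hyr, hyr.not_ge, this]
  · simp [hrx.not_gt, hry, hry.not_gt]

theorem fract_sub_eq_fract_sub_iff {x y r : R} (hx : x ∈ Set.Ico 0 1) (hy : y ∈ Set.Ico 0 1) :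
    Int.fract (x - r) = Int.fract (y - r) ↔ x = y := by
  rw [Int.fract_eq_fract, sub_sub_sub_cancel_right, ← Int.fract_eq_fract,
    Int.fract_eq_self.2 hx, Int.fract_eq_self.2 hy]

theorem eq_intCast_iff_floor_fract (x : R) (d : ℤ) :
    x = d ↔ ⌊x⌋ = d ∧ Int.fract x = 0 := by
  constructor
  · rintro rfl
    exact ⟨Int.floor_intCast d, Int.fract_intCast d⟩
  · rintro ⟨rfl, hfract⟩
    rw [← Int.self_sub_fract, hfract, sub_zero]

theorem le_intCast_iff_floor_fract (x : R) (d : ℤ) :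
    x ≤ d ↔ ⌊x⌋ < d ∨ ⌊x⌋ = d ∧ Int.fract x = 0 := by
  rw [le_iff_lt_or_eq, Int.floor_lt, eq_intCast_iff_floor_fract]

theorem intCast_lt_iff_floor_fract (x : R) (d : ℤ) :
    d < x ↔ d < ⌊x⌋ ∨ ⌊x⌋ = d ∧ Int.fract x ≠ 0 := by
  rw [← not_le, le_intCast_iff_floor_fract]
  grind

theorem sub_lt_intCast_iff_floor_fract (x y : R) (d : ℤ) :
    x - y < d ↔ ⌊x⌋ - ⌊y⌋ < d ∨ ⌊x⌋ - ⌊y⌋ = d ∧ Int.fract x < Int.fract y := by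
  have hsplit : x - y = (⌊x⌋ - ⌊y⌋ : ℤ) + (Int.fract x - Int.fract y) := by
    rw [Int.cast_sub, ← Int.self_sub_fract x, ← Int.self_sub_fract y]
    ring
  have hfx := Int.fract_nonneg x
  have hfx' := Int.fract_lt_one x
  have hfy := Int.fract_nonneg y
  have hfy' := Int.fract_lt_one y
  rw [hsplit]
  rcases lt_trichotomy (⌊x⌋ - ⌊y⌋) d with hlt | heq | hgt
  · have hcast : ((⌊x⌋ - ⌊y⌋ : ℤ) : R) + 1 ≤ d := by exact_mod_cast hlt
    exact iff_of_true (by linarith) (Or.inl hlt)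
  · simp [heq]
  · have hcast : (d : R) + 1 ≤ (⌊x⌋ - ⌊y⌋ : ℤ) := by exact_mod_cast hgt
    exact iff_of_false (by linarith) (by omega)

theorem intCast_lt_sub_iff_floor_fract (x y : R) (d : ℤ) :
    d < x - y ↔ d < ⌊x⌋ - ⌊y⌋ ∨ ⌊x⌋ - ⌊y⌋ = d ∧ Int.fract y < Int.fract x := by
  rw [← neg_lt_neg_iff, neg_sub, ← Int.cast_neg, sub_lt_intCast_iff_floor_fract]
  grind

theorem sub_eq_intCast_iff_floor_fract (x y : R) (d : ℤ) :
    x - y = d ↔ ⌊x⌋ - ⌊y⌋ = d ∧ Int.fract x = Int.fract y := by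
  rw [eq_iff_le_not_lt, ← not_lt, sub_lt_intCast_iff_floor_fract, intCast_lt_sub_iff_floor_fract]
  grind

theorem sub_le_intCast_iff_floor_fract (x y : R) (d : ℤ) :
    x - y ≤ d ↔ ⌊x⌋ - ⌊y⌋ < d ∨
      ⌊x⌋ - ⌊y⌋ = d ∧ (Int.fract x < Int.fract y ∨ Int.fract x = Int.fract y) := by
  rw [le_iff_lt_or_eq, sub_lt_intCast_iff_floor_fract, sub_eq_intCast_iff_floor_fract, or_assoc,
    ← and_or_left]

theorem intCast_le_sub_iff_floor_fract (x y : R) (d : ℤ) :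
    d ≤ x - y ↔ d < ⌊x⌋ - ⌊y⌋ ∨
      ⌊x⌋ - ⌊y⌋ = d ∧ (Int.fract y < Int.fract x ∨ Int.fract x = Int.fract y) := by
  rw [le_iff_lt_or_eq, eq_comm, intCast_lt_sub_iff_floor_fract, sub_eq_intCast_iff_floor_fract,
    or_assoc, ← and_or_left]

end Fract

section Valuation

variable {k : ℕ} {v : Val k} {i : Fin (k + 1)}

theorem natCast_intPart (hi : 0 ≤ v i) : (intPart v i : ℤ) = ⌊v i⌋ :=
  Int.toNat_of_nonneg (Int.floor_nonneg.2 hi)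

theorem relFract_mem_Ico (v : Val k) (i : Fin (k + 1)) : relFract v i ∈ Set.Ico 0 1 := by
  unfold relFract
  split_ifs <;> exact ⟨Int.fract_nonneg _, Int.fract_lt_one _⟩

theorem fract_relFract_sub_relFract_zero (hi : i ≠ 0) :
    Int.fract (relFract v i - relFract v 0) = Int.fract (v i) := by
  rw [Int.fract_eq_fract]
  simp only [relFract, if_neg hi, if_true]
  generalize Int.fract (1 - Int.fract (v 0)) = r
  refine ⟨-⌊Int.fract (v i) + r⌋ - ⌊v i⌋, ?_⟩
  push_cast
  rw [← Int.self_sub_fract (Int.fract (v i) + r), ← Int.self_sub_fract (v i)]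
  ring

end Valuation

section Pattern

variable {k : ℕ} {v₀ v : Val k} {η : PatSeq k} {i j : Fin (k + 1)}

theorem exists_eq_posOf_mem_get {x : Fin (k + 1) × Bool} (hx : ∃ p ∈ η, x ∈ p) :
    ∃ m : Fin η.length, (m : ℕ) = posOf η x ∧ x ∈ η.get m := by
  have hlt : posOf η x < η.length := List.findIdx_lt_length.2 (by simpa using hx)
  exact ⟨⟨posOf η x, hlt⟩, rfl, of_decide_eq_true (List.findIdx_getElem (w := hlt))⟩

theorem PatternOf.posOf_eq_posOf_iff (hη : PatternOf v₀ v η) (x y : Fin (k + 1) × Bool) :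
    posOf η x = posOf η y ↔
      relFract (bval v₀ v x.2) x.1 = relFract (bval v₀ v y.2) y.1 := by
  obtain ⟨⟨-, -, -, -, hcover⟩, hord⟩ := hη
  obtain ⟨m, hm, hxm⟩ := exists_eq_posOf_mem_get (hcover x)
  obtain ⟨n, hn, hyn⟩ := exists_eq_posOf_mem_get (hcover y)
  rw [← hm, ← hn, ← Fin.ext_iff]
  exact (hord m n _ _ _ _ hxm hyn).1.symm

theorem PatternOf.posOf_lt_posOf_iff (hη : PatternOf v₀ v η) (x y : Fin (k + 1) × Bool) :
    posOf η x < posOf η y ↔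
      relFract (bval v₀ v x.2) x.1 < relFract (bval v₀ v y.2) y.1 := by
  obtain ⟨⟨-, -, -, -, hcover⟩, hord⟩ := hη
  obtain ⟨m, hm, hxm⟩ := exists_eq_posOf_mem_get (hcover x)
  obtain ⟨n, hn, hyn⟩ := exists_eq_posOf_mem_get (hcover y)
  rw [← hm, ← hn]
  exact (hord m n _ _ _ _ hxm hyn).2.symm

theorem PatternOf.fracEqP_iff (hη : PatternOf v₀ v η) (hi : i ≠ 0) (hj : j ≠ 0) :
    fracEqP η i j ↔ Int.fract (v i) = Int.fract (v j) := by
  rw [← fract_relFract_sub_relFract_zero hi, ← fract_relFract_sub_relFract_zero hj,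
    fract_sub_eq_fract_sub_iff (relFract_mem_Ico v i) (relFract_mem_Ico v j)]
  exact hη.posOf_eq_posOf_iff (i, true) (j, true)

theorem PatternOf.fracZeroP_iff (hη : PatternOf v₀ v η) (hi : i ≠ 0) :
    fracZeroP η i ↔ Int.fract (v i) = 0 := by
  rw [← fract_relFract_sub_relFract_zero hi, ← Int.fract_zero, ← sub_self (relFract v 0),
    fract_sub_eq_fract_sub_iff (relFract_mem_Ico v i) (relFract_mem_Ico v 0)]
  exact hη.posOf_eq_posOf_iff (i, true) (0, true)

theorem PatternOf.fracGtP_iff (hη : PatternOf v₀ v η) (hi : i ≠ 0) (hj : j ≠ 0) :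
    fracGtP η i j ↔ Int.fract (v j) < Int.fract (v i) := by
  rw [← fract_relFract_sub_relFract_zero hi, ← fract_relFract_sub_relFract_zero hj,
    fract_sub_lt_fract_sub_iff (relFract_mem_Ico v i) (relFract_mem_Ico v j)
      (relFract_mem_Ico v 0)]
  simp only [fracGtP, ← not_lt, hη.posOf_lt_posOf_iff, bval]

end Pattern

section Constraint

variable {k : ℕ} {v₀ v : Val k} {η : PatSeq k}

theorem CC.sat_diff_iff_satP (hv : IsVal v) (hη : PatternOf v₀ v η) (i j : Fin k) (op : CCmp)
    (d : ℕ) : (CC.diff i j op d).sat v ↔ (CC.diff i j op d).satP η (intPart v) := by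
  have hi := i.succ_ne_zero
  have hj := j.succ_ne_zero
  simp only [CC.sat, CC.satP, natCast_intPart (hv _), hη.fracGtP_iff hi hj, hη.fracGtP_iff hj hi,
    hη.fracEqP_iff hi hj, ← Int.cast_natCast (R := ℝ) d]
  cases op
  case lt => exact sub_lt_intCast_iff_floor_fract _ _ _
  case le => exact sub_le_intCast_iff_floor_fract _ _ _
  case eq => exact sub_eq_intCast_iff_floor_fract _ _ _
  case ge => exact intCast_le_sub_iff_floor_fract _ _ _
  case gt => exact intCast_lt_sub_iff_floor_fract _ _ _

theorem CC.sat_single_iff_satP (hv : IsVal v) (hη : PatternOf v₀ v η) (i : Fin k) (op : CCmp)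
    (d : ℕ) : (CC.single i op d).sat v ↔ (CC.single i op d).satP η (intPart v) := by
  simp only [CC.sat, CC.satP, natCast_intPart (hv _), hη.fracZeroP_iff i.succ_ne_zero,
    ← Int.cast_natCast (R := ℝ) d]
  cases op
  case lt => exact Int.floor_lt.symm
  case le => exact le_intCast_iff_floor_fract _ _
  case eq => exact eq_intCast_iff_floor_fract _ _
  case ge => exact Int.le_floor.symm
  case gt => exact intCast_lt_iff_floor_fract _ _

end Constraint

theorem test_via_pattern_general {k : ℕ} {v₀ v : Val k} (hv : IsVal v) {η : PatSeq k}
    (hη : PatternOf v₀ v η) (c : CC k) : c.sat v ↔ c.satP η (intPart v) := by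
  induction c with
  | diff i j op d => exact CC.sat_diff_iff_satP hv hη i j op d
  | single i op d => exact CC.sat_single_iff_satP hv hη i op d
  | not c ih => exact not_congr ih
  | and c₁ c₂ ih₁ ih₂ => exact and_congr ih₁ ih₂

/-- Lemma `tests`(1). If the initialized pair `(v₀,v)` has pattern
`η`, then for every clock constraint `c`: `v ∈ c` iff `int(v) ∈ c^η`. -/
theorem test_via_pattern (k : ℕ) (hk : 1 ≤ k) (v₀ v : Val k)
    (hv₀ : IsVal v₀) (hv : IsVal v) (h0 : Initial v₀)
    (η : PatSeq k) (hη : PatternOf v₀ v η) (c : CC k) :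
    c.sat v ↔ c.satP η (intPart v) := by
  exact test_via_pattern_general hv hη c

end PTApaper
end
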